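/- arXiv:2311.11663 — 8 statements merged into one kernel-verified Lean document; each statement's English description precedes it below -/
import Mathlib

section
/- There exist constants c₁ > 0, c₂ > 0 and c₃ > 0 such that the following holds. Let (Con, Red) be a black-box HF⇒(1/2+ε)-HF proof with parameters (ℓ, ℓ', a) whose reduction makes q queries. If 0 < ε ≤ 1/10, ℓ' ≥ log₂(1/ε²) + c₃, and a ≤ 2^ℓ/10, then q ≥ max(c₁·(1/ε), c₂·(ℓ − log₂(2a))). -/
open scoped BigOperators

attribute [local instance] Classical.propDecidable

noncomputable section

/-- Probability that a uniformly random element of a finite type satisfies `P`. -/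
def uPr {X : Type*} [Fintype X] (P : X → Prop) : ℝ :=
  (Fintype.card {x : X // P x} : ℝ) / (Fintype.card X : ℝ)

/-- Probability of `P` under `t` i.i.d. bits, each equal to `true` with probability `p`. -/
def bPr {t : ℕ} (p : ℝ) (P : (Fin t → Bool) → Prop) : ℝ :=
  ∑ x : Fin t → Bool, if P x then (∏ i, if x i then p else 1 - p) else 0

/-- An adaptive `q`-query oracle procedure with input set `I` and query set `Q`. -/
structure OracleProc (q : ℕ) (I : Type*) (Q : Type*) where
  qry : (i : Fin q) → I → (Fin i.val → Bool) → Q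
  out : I → (Fin q → Bool) → Bool

/-- The answer to the `i`-th query when running with oracle `D` on input `w`. -/
def OracleProc.ans {q : ℕ} {I Q : Type*} (P : OracleProc q I Q) (D : Q → Bool) (w : I)
    (i : Fin q) : Bool :=
  D (P.qry i w (fun j => P.ans D w ⟨j.val, j.isLt.trans i.isLt⟩))
termination_by i.val
decreasing_by exact j.isLt

/-- The output of the oracle procedure, with oracle `D`, on input `w`. -/
def OracleProc.run {q : ℕ} {I Q : Type*} (P : OracleProc q I Q) (D : Q → Bool) (w : I) : Bool :=
  P.out w (P.ans D w)

/-- A clause over `n` Boolean variables: a list of literals (variable, polarity). -/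
abbrev BClause (n : ℕ) := List (Fin n × Bool)

/-- A CNF over `n` Boolean variables: a list of clauses. -/
abbrev BCNF (n : ℕ) := List (BClause n)

def BClause.eval {n : ℕ} (c : BClause n) (x : Fin n → Bool) : Bool :=
  c.any (fun l => x l.1 == l.2)

def BCNF.eval {n : ℕ} (φ : BCNF n) (x : Fin n → Bool) : Bool :=
  φ.all (fun c => BClause.eval c x)

/-- A `q`-CNF: every clause has at most `q` literals. -/
def BCNF.width {n : ℕ} (φ : BCNF n) (q : ℕ) : Prop :=
  ∀ c ∈ φ, c.length ≤ q

/-- Hamming weight. -/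
def wt {n : ℕ} (x : Fin n → Bool) : ℕ :=
  (Finset.univ.filter (fun i => x i = true)).card

/-- The set of free (`*`) positions of a restriction. -/
def freeSet {n : ℕ} (ρ : Fin n → Option Bool) : Finset (Fin n) :=
  Finset.univ.filter (fun i => ρ i = none)

/-- The number of free positions of a restriction. -/
def freeCount {n : ℕ} (ρ : Fin n → Option Bool) : ℕ := (freeSet ρ).card

/-- Fill the free positions of a restriction `ρ` with the bits of `x`, in order. -/
def Fill {n t : ℕ} (ρ : Fin n → Option Bool) (h : freeCount ρ = t)
    (x : Fin t → Bool) : Fin n → Bool := fun i =>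
  if hm : i ∈ freeSet ρ then x (((freeSet ρ).orderIsoOfFin h).symm ⟨i, hm⟩)
  else (ρ i).getD false

/-- The restrictions on `n` variables with exactly `t` free positions. -/
abbrev Restr (n t : ℕ) := {ρ : Fin n → Option Bool // freeCount ρ = t}

/-- Relative Hamming distance. -/
def relDist {n : ℕ} (x y : Fin n → Bool) : ℝ :=
  ((Finset.univ.filter (fun i => x i ≠ y i)).card : ℝ) / n

end
namespace HA

variable {Q : Type} [Fintype Q] [DecidableEq Q]

/-- expectation under product weights -/
noncomputable def Ew (w : Q → Bool → ℝ) (g : (Q → Bool) → ℝ) : ℝ := ∑ D : Q → Bool, (∏ i, w i (D i)) * g D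

noncomputable def dl (b : Bool) : Bool → ℝ := fun c => if c = b then 1 else 0

inductive IsDT : ℕ → ((Q → Bool) → Bool) → Prop
  | const (n : ℕ) (b : Bool) : IsDT n (fun _ => b)
  | node (n : ℕ) (i : Q) (k : Bool → (Q → Bool) → Bool) (h : ∀ b, IsDT n (k b)) :
      IsDT (n+1) (fun D => k (D i) D)

lemma Ew_prod (w : Q → Bool → ℝ) (φ : Q → Bool → ℝ) :
    Ew w (fun D => ∏ i, φ i (D i)) = ∏ i, (w i true * φ i true + w i false * φ i false) := by
  have h := Finset.prod_univ_sum (fun _ : Q => (Finset.univ : Finset Bool))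
    (fun i b => w i b * φ i b)
  simp only [Fintype.sum_bool, Fintype.piFinset_univ] at h
  rw [h]
  simp [Ew, Finset.prod_mul_distrib]

lemma Ew_one (w : Q → Bool → ℝ) (h : ∀ i, w i true + w i false = 1) : Ew w (fun _ => 1) = 1 := by
  have := Ew_prod w (fun _ _ => 1)
  simpa [h] using this

lemma Ew_mono {w : Q → Bool → ℝ} (hw : ∀ i b, 0 ≤ w i b) {g g' : (Q → Bool) → ℝ}
    (h : ∀ D, g D ≤ g' D) : Ew w g ≤ Ew w g' :=
  Finset.sum_le_sum fun D _ => mul_le_mul_of_nonneg_left (h D)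
    (Finset.prod_nonneg fun i _ => hw i _)

lemma Ew_nonneg {w : Q → Bool → ℝ} (hw : ∀ i b, 0 ≤ w i b) {g : (Q → Bool) → ℝ}
    (h : ∀ D, 0 ≤ g D) : 0 ≤ Ew w g :=
  Finset.sum_nonneg fun D _ => mul_nonneg (Finset.prod_nonneg fun i _ => hw i _) (h D)

lemma Ew_sum {ι : Type*} (s : Finset ι) (w : Q → Bool → ℝ) (g : ι → (Q → Bool) → ℝ) :
    Ew w (fun D => ∑ j ∈ s, g j D) = ∑ j ∈ s, Ew w (g j) := by
  unfold Ew
  rw [Finset.sum_comm]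
  simp [Finset.mul_sum]

lemma prod_update (w : Q → Bool → ℝ) (i : Q) (b : Bool) (D : Q → Bool) :
    ∏ j, Function.update w i (dl b) j (D j)
      = dl b (D i) * ∏ j ∈ Finset.univ.erase i, w j (D j) := by
  rw [← Finset.mul_prod_erase _ _ (Finset.mem_univ i)]
  congr 1
  · simp
  · apply Finset.prod_congr rfl
    intro j hj
    rw [Function.update_of_ne (Finset.ne_of_mem_erase hj)]

lemma Ew_split (w : Q → Bool → ℝ) (i : Q) (g : (Q → Bool) → ℝ) :
    Ew w g = w i true * Ew (Function.update w i (dl true)) g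
      + w i false * Ew (Function.update w i (dl false)) g := by
  unfold Ew
  rw [Finset.mul_sum, Finset.mul_sum, ← Finset.sum_add_distrib]
  apply Finset.sum_congr rfl
  intro D _
  rw [prod_update, prod_update, ← Finset.mul_prod_erase _ _ (Finset.mem_univ i)]
  cases h : D i <;> simp [dl] <;> ring

lemma Ew_congr_upd (w : Q → Bool → ℝ) (i : Q) (b : Bool) {g g' : (Q → Bool) → ℝ}
    (h : ∀ D, D i = b → g D = g' D) :
    Ew (Function.update w i (dl b)) g = Ew (Function.update w i (dl b)) g' := by
  unfold Ew
  apply Finset.sum_congr rfl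
  intro D _
  rw [prod_update]
  by_cases hb : D i = b
  · rw [h D hb]
  · simp [dl, hb]

/-! first bound -/

structure Dom (r : ℝ) (w u : Q → Bool → ℝ) : Prop where
  w0 : ∀ i b, 0 ≤ w i b
  u0 : ∀ i b, 0 ≤ u i b
  w1 : ∀ i, w i true + w i false = 1
  u1 : ∀ i, u i true + u i false = 1
  le : ∀ i b, w i b ≤ r * u i b

lemma Dom.upd {r : ℝ} (hr : 1 ≤ r) {w u : Q → Bool → ℝ} (h : Dom r w u) (i : Q) (b : Bool) :
    Dom r (Function.update w i (dl b)) (Function.update u i (dl b)) := by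
  constructor
  · intro j c
    by_cases hj : j = i
    · subst hj; simp only [Function.update_self, dl]; split_ifs <;> simp
    · simp only [Function.update_of_ne hj]; exact h.w0 j c
  · intro j c
    by_cases hj : j = i
    · subst hj; simp only [Function.update_self, dl]; split_ifs <;> simp
    · simp only [Function.update_of_ne hj]; exact h.u0 j c
  · intro j
    by_cases hj : j = i
    · subst hj; cases b <;> simp [dl]
    · simp only [Function.update_of_ne hj]; exact h.w1 j
  · intro j
    by_cases hj : j = i
    · subst hj; cases b <;> simp [dl]
    · simp only [Function.update_of_ne hj]; exact h.u1 j
  · intro j c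
    by_cases hj : j = i
    · subst hj; simp only [Function.update_self, dl]; split_ifs <;> simp [hr]
    · simp only [Function.update_of_ne hj]; exact h.le j c

lemma tree_dom {r C : ℝ} (hr : 1 ≤ r) (hC : 0 ≤ C) {g : (Q → Bool) → ℝ} (hg : ∀ D, 0 ≤ g D)
    (H : ∀ w u : Q → Bool → ℝ, Dom r w u → Ew w g ≤ C * Ew u g)
    {n : ℕ} {T : (Q → Bool) → Bool} (hT : IsDT n T) :
    ∀ w u : Q → Bool → ℝ, Dom r w u →
      Ew w (fun D => (if T D = true then 1 else 0) * g D)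
        ≤ r ^ n * C * Ew u (fun D => (if T D = true then 1 else 0) * g D) := by
  induction hT with
  | const n b =>
    intro w u h
    cases b
    · simp [Ew]
    · simp only [if_true, one_mul]
      have h1 := H w u h
      have h2 : (1:ℝ) ≤ r ^ n := one_le_pow₀ hr
      have h3 : 0 ≤ C * Ew u g := mul_nonneg hC (Ew_nonneg h.u0 hg)
      nlinarith
  | node n i k hk ih =>
    intro w u h
    have key : ∀ (v : Q → Bool → ℝ) (b : Bool), Ew (Function.update v i (dl b))
        (fun D => (if k (D i) D = true then 1 else 0) * g D)
        = Ew (Function.update v i (dl b)) (fun D => (if k b D = true then 1 else 0) * g D) := by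
      intro v b
      apply Ew_congr_upd
      intro D hD
      rw [hD]
    rw [Ew_split w i, Ew_split u i, key, key, key, key]
    have main : ∀ b, w i b * Ew (Function.update w i (dl b))
          (fun D => (if k b D = true then 1 else 0) * g D)
        ≤ (r * u i b) * (r ^ n * C * Ew (Function.update u i (dl b))
          (fun D => (if k b D = true then 1 else 0) * g D)) := by
      intro b
      have hu := h.upd hr i b
      apply mul_le_mul (h.le i b) (ih b _ _ hu)
      · apply Ew_nonneg hu.w0
        intro D; apply mul_nonneg _ (hg D); split_ifs <;> simp
      · exact mul_nonneg (by linarith) (h.u0 i b)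
    have h1 := main true
    have h2 := main false
    rw [pow_succ]
    linarith

noncomputable def gF {X : Type} (T : X → (Q → Bool) → Bool) (s : Finset X) (D : Q → Bool) : ℝ :=
  ∏ x ∈ s, (if T x D = true then 1 else 0)

omit [Fintype Q] [DecidableEq Q] in
lemma gF_nonneg {X : Type} (T : X → (Q → Bool) → Bool) (s : Finset X) (D : Q → Bool) :
    0 ≤ gF T s D := Finset.prod_nonneg fun x _ => by split_ifs <;> simp

omit [Fintype Q] [DecidableEq Q] in
lemma gF_eq {X : Type} (T : X → (Q → Bool) → Bool) (s : Finset X) (D : Q → Bool) :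
    gF T s D = if (∀ x ∈ s, T x D = true) then 1 else 0 := by
  unfold gF
  split_ifs with h
  · exact Finset.prod_eq_one fun x hx => by simp [h x hx]
  · push Not at h
    obtain ⟨x, hx, hx'⟩ := h
    exact Finset.prod_eq_zero hx (by simp [hx'])

lemma trees_dom {X : Type} {r : ℝ} (hr : 1 ≤ r) {q : ℕ} (T : X → (Q → Bool) → Bool)
    (hT : ∀ x, IsDT q (T x)) (s : Finset X) :
    ∀ w u : Q → Bool → ℝ, Dom r w u → Ew w (gF T s) ≤ r ^ (q * s.card) * Ew u (gF T s) := by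
  classical
  induction s using Finset.induction_on with
  | empty =>
    intro w u h
    have : gF T (∅ : Finset X) = fun _ => 1 := by ext D; simp [gF]
    rw [this, Ew_one w h.w1, Ew_one u h.u1]; simp
  | insert x s hx ih =>
    intro w u h
    have e : gF T (insert x s) = fun D => (if T x D = true then 1 else 0) * gF T s D := by
      ext D; simp [gF, Finset.prod_insert hx]
    rw [e, Finset.card_insert_of_notMem hx, mul_add, mul_one, add_comm, pow_add]
    exact tree_dom hr (by positivity) (gF_nonneg T s) ih (hT x) w u h

/-! second bound -/

structure Good (w u : Q → Bool → ℝ) : Prop where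
  w0 : ∀ i b, 0 ≤ w i b
  u0 : ∀ i b, 0 ≤ u i b
  w1 : ∀ i, w i true + w i false = 1
  u1 : ∀ i, u i true + u i false = 1
  wl : ∀ i b, 0 < w i b → 1 / 4 ≤ w i b
  ul : ∀ i b, 0 < w i b → 1 / 2 ≤ u i b
  uw : ∀ i b, 0 < u i b → 0 < w i b

lemma Good.upd {w u : Q → Bool → ℝ} (h : Good w u) (i : Q) (b : Bool) :
    Good (Function.update w i (dl b)) (Function.update u i (dl b)) := by
  constructor
  · intro j c
    by_cases hj : j = i
    · subst hj; simp only [Function.update_self, dl]; split_ifs <;> simp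
    · simp only [Function.update_of_ne hj]; exact h.w0 j c
  · intro j c
    by_cases hj : j = i
    · subst hj; simp only [Function.update_self, dl]; split_ifs <;> simp
    · simp only [Function.update_of_ne hj]; exact h.u0 j c
  · intro j
    by_cases hj : j = i
    · subst hj; cases b <;> simp [dl]
    · simp only [Function.update_of_ne hj]; exact h.w1 j
  · intro j
    by_cases hj : j = i
    · subst hj; cases b <;> simp [dl]
    · simp only [Function.update_of_ne hj]; exact h.u1 j
  · intro j c
    by_cases hj : j = i
    · subst hj; simp only [Function.update_self, dl]; split_ifs <;> norm_num
    · simp only [Function.update_of_ne hj]; exact h.wl j c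
  · intro j c
    by_cases hj : j = i
    · subst hj; simp only [Function.update_self, dl]; split_ifs <;> norm_num
    · simp only [Function.update_of_ne hj]; exact h.ul j c
  · intro j c
    by_cases hj : j = i
    · subst hj; simp only [Function.update_self, dl]; exact id
    · simp only [Function.update_of_ne hj]; exact h.uw j c

lemma Ew_split_b (w : Q → Bool → ℝ) (i : Q) (b : Bool) (g : (Q → Bool) → ℝ) :
    Ew w g = w i b * Ew (Function.update w i (dl b)) g
      + w i (!b) * Ew (Function.update w i (dl (!b))) g := by
  rw [Ew_split w i]
  cases b <;> simp
  ring

lemma tree_good {B γ : ℝ} (hB : 0 ≤ B) (hγ : 0 ≤ γ) {g : (Q → Bool) → ℝ} (hg : ∀ D, 0 ≤ g D)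
    (H : ∀ w u : Q → Bool → ℝ, Good w u → B < Ew w g → γ ≤ Ew u g)
    {n : ℕ} {T : (Q → Bool) → Bool} (hT : IsDT n T) :
    ∀ (w u : Q → Bool → ℝ) (D₀ : Q → Bool), Good w u → (∀ i, 0 < w i (D₀ i)) → T D₀ = false →
      (∀ D, (∀ i, 0 < w i (D i)) → T D = false → g D = 0) →
      (1 - (1/4) ^ n) * B < Ew w g → (1/2) ^ n * γ ≤ Ew u g := by
  induction hT with
  | const n b =>
    intro w u D₀ h hD hb hz hE
    exfalso
    have : Ew w g = 0 := by
      apply Finset.sum_eq_zero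
      intro D _
      by_cases hs : ∀ i, 0 < w i (D i)
      · rw [hz D hs hb, mul_zero]
      · push Not at hs
        obtain ⟨i, hi⟩ := hs
        rw [Finset.prod_eq_zero (Finset.mem_univ i) (le_antisymm hi (h.w0 i _)), zero_mul]
    have h2 : ((1:ℝ)/4) ^ n ≤ 1 := pow_le_one₀ (by norm_num) (by norm_num)
    have : 0 ≤ (1 - ((1:ℝ)/4) ^ n) * B := mul_nonneg (by linarith) hB
    linarith
  | node n i k hk ih =>
    intro w u D₀ h hD hb hz hE
    set b := D₀ i with hbdef
    have hwb : 0 < w i b := hD i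
    have hwl := h.wl i b hwb
    have hw1 : w i b + w i (!b) = 1 := by
      have := h.w1 i
      cases b <;> simp <;> linarith
    have hn0 : (0:ℝ) ≤ (1/2) ^ n := by positivity
    have hn1 : ((1:ℝ)/2) ^ n ≤ 1 := pow_le_one₀ (by norm_num) (by norm_num)
    rw [Ew_split_b u i b]
    have p0 : 0 ≤ Ew (Function.update u i (dl b)) g := Ew_nonneg (h.upd i b).u0 hg
    have p1 : 0 ≤ Ew (Function.update u i (dl (!b))) g := Ew_nonneg (h.upd i (!b)).u0 hg
    by_cases hc : (1 - (1/4) ^ n) * B < Ew (Function.update w i (dl b)) g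
    · have := ih b (Function.update w i (dl b)) (Function.update u i (dl b)) D₀ (h.upd i b)
        (by
          intro j
          by_cases hj : j = i
          · subst hj; simp [dl, hbdef]
          · simp only [Function.update_of_ne hj]; exact hD j) hb
        (by
          intro D hs hTD
          have hDi : D i = b := by
            have := hs i
            simp only [Function.update_self, dl] at this
            by_contra hne
            simp [hne] at this
          apply hz D
          · intro j
            by_cases hj : j = i
            · subst hj; rw [hDi]; exact hwb
            · have := hs j
              simpa only [Function.update_of_ne hj] using this
          · simp only [hDi]; exact hTD) hc
      have hu := h.ul i b hwb
      have hu' := h.u0 i (!b)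
      have e1 : (1/2) * ((1/2) ^ n * γ) ≤ u i b * Ew (Function.update u i (dl b)) g :=
        mul_le_mul hu this (by positivity) (h.u0 i b)
      have e2 : 0 ≤ u i (!b) * Ew (Function.update u i (dl (!b))) g := mul_nonneg hu' p1
      rw [pow_succ]
      linarith
    · push Not at hc
      rw [Ew_split_b w i b] at hE
      have hw' := h.w0 i (!b)
      have hpn : (0:ℝ) ≤ (1/4)^n := by positivity
      have e0 : w i b * Ew (Function.update w i (dl b)) g ≤ w i b * ((1 - (1/4) ^ n) * B) :=
        mul_le_mul_of_nonneg_left hc hwb.le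
      have e3 : (1/4) * ((1/4)^n * B) ≤ w i b * ((1/4)^n * B) :=
        mul_le_mul_of_nonneg_right hwl (by positivity)
      have e4 : w i (!b) * B < w i (!b) * Ew (Function.update w i (dl (!b))) g := by
        have : w i (!b) = 1 - w i b := by linarith
        rw [pow_succ] at hE
        have e5 : w i (!b) * B = B - w i b * B := by rw [this]; ring
        nlinarith
      have hlt : B < Ew (Function.update w i (dl (!b))) g := lt_of_mul_lt_mul_left e4 hw'
      have hpos : 0 < w i (!b) := by
        rcases hw'.lt_or_eq with h' | h'
        · exact h'
        · rw [← h'] at e4; simp at e4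
      have := H _ _ (h.upd i (!b)) hlt
      have hu := h.ul i (!b) hpos
      have e1 : (1/2) * γ ≤ u i (!b) * Ew (Function.update u i (dl (!b))) g :=
        mul_le_mul hu this hγ (h.u0 i _)
      have e2 : 0 ≤ u i b * Ew (Function.update u i (dl b)) g := mul_nonneg (h.u0 i b) p0
      have e6 : (1/2)^n * γ ≤ γ := mul_le_of_le_one_left hγ hn1
      rw [pow_succ]
      linarith

lemma trees_good {X : Type} {q : ℕ} (T : X → (Q → Bool) → Bool)
    (hT : ∀ x, IsDT q (T x)) (s : Finset X) (m : ℕ) :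
    ∀ w u : Q → Bool → ℝ, Good w u → (1 - (1/4) ^ q) ^ m < Ew w (gF T s) →
      ((1/2) ^ q) ^ m ≤ Ew u (gF T s) := by
  have hle : ∀ D, gF T s D ≤ 1 := by
    intro D; rw [gF_eq]; split_ifs <;> norm_num
  have hq : (0:ℝ) ≤ 1 - (1/4)^q := by
    have : ((1:ℝ)/4) ^ q ≤ 1 := pow_le_one₀ (by norm_num) (by norm_num)
    linarith
  have hq2 : ((1:ℝ)/2)^q ≤ 1 := pow_le_one₀ (by norm_num) (by norm_num)
  induction m with
  | zero =>
    intro w u h hE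
    exfalso
    have := Ew_mono h.w0 hle
    rw [Ew_one w h.w1] at this
    simp at hE
    linarith
  | succ m ih =>
    intro w u h hE
    by_cases hall : ∀ D, (∀ i, 0 < u i (D i)) → gF T s D = 1
    · have : Ew u (gF T s) = Ew u (fun _ => 1) := by
        apply Finset.sum_congr rfl
        intro D _
        by_cases hs : ∀ i, 0 < u i (D i)
        · rw [hall D hs]
        · push Not at hs
          obtain ⟨i, hi⟩ := hs
          rw [Finset.prod_eq_zero (Finset.mem_univ i) (le_antisymm hi (h.u0 i _)), zero_mul,
            zero_mul]
      rw [this, Ew_one u h.u1]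
      exact pow_le_one₀ (by positivity) hq2
    · push Not at hall
      obtain ⟨D, hD, hne⟩ := hall
      rw [gF_eq] at hne
      have : ¬ ∀ x ∈ s, T x D = true := by
        intro hh; exact hne (by rw [if_pos hh])
      push Not at this
      obtain ⟨x, hx, hxD⟩ := this
      rw [pow_succ'] at hE ⊢
      refine tree_good (by positivity) (by positivity) (gF_nonneg T s) ih (hT x) w u D h
        (fun i => h.uw i _ (hD i)) (by simpa using hxD) ?_ hE
      intro D' _ hf
      rw [gF_eq, if_neg]
      intro hh
      simp [hh x hx] at hf

/-! oracle procedures as trees -/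

omit [Fintype Q] [DecidableEq Q] in
lemma isDT_aux {q : ℕ} {I : Type} (P : OracleProc q I Q) (w : I) (t : Bool) :
    ∀ (n i : ℕ) (hi : i + n = q) (pre : Fin i → Bool), ∃ T : (Q → Bool) → Bool, IsDT n T ∧
      ∀ D, (∀ j : Fin i, P.ans D w ⟨j.val, by omega⟩ = pre j) →
        T D = (P.run D w == t) := by
  intro n
  induction n with
  | zero =>
    intro i hi pre
    have hi' : i = q := by omega
    subst hi'
    refine ⟨fun _ => (P.out w pre == t), IsDT.const _ _, ?_⟩
    intro D h
    have : P.ans D w = pre := funext fun j => h j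
    simp [OracleProc.run, this]
  | succ n ih =>
    intro i hi pre
    have hlt : i < q := by omega
    choose k hk hk' using fun b : Bool => ih (i+1) (by omega) (Fin.snoc pre b : Fin (i+1) → Bool)
    refine ⟨fun D => k (D (P.qry ⟨i, hlt⟩ w pre)) D, IsDT.node n _ k hk, ?_⟩
    intro D h
    apply hk'
    intro j
    refine Fin.lastCases ?_ (fun j => ?_) j
    · rw [Fin.snoc_last]
      rw [show (⟨(Fin.last i).val, by simp; omega⟩ : Fin q) = ⟨i, hlt⟩ from rfl]
      rw [OracleProc.ans]
      congr 1
      congr 1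
      funext j
      exact h j
    · rw [Fin.snoc_castSucc]
      exact h j

omit [Fintype Q] [DecidableEq Q] in
lemma isDT_run {q : ℕ} {I : Type} (P : OracleProc q I Q) (w : I) (t : Bool) :
    IsDT q (fun D => (P.run D w == t)) := by
  obtain ⟨T, hT, h⟩ := isDT_aux P w t q 0 (by simp) Fin.elim0
  have : T = (fun D => (P.run D w == t)) := funext fun D => h D (fun j => j.elim0)
  rwa [← this]

/-! concentration -/

noncomputable def nz (p : ℝ) (c : Q → Bool) : Q → Bool → ℝ := fun i b => if b = c i then p else 1 - p

lemma chern {ε : ℝ} (h0 : 0 < ε) (h1 : ε ≤ 1/10) (c : Q → Bool) :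
    Ew (nz (1/2 + 2 * ε) c) (fun D =>
      if uPr (fun x : Q => D x = c x) ≥ 1/2 + ε then 0 else 1)
      ≤ Real.exp (- ε^2 * (Fintype.card Q : ℝ)) := by
  set p := 1/2 + 2 * ε with hp
  set φ : Q → Bool → ℝ := fun i b => Real.exp (2 * ε * (p - if b = c i then 1 else 0) - 2 * ε^2)
    with hφ
  have hw0 : ∀ i b, 0 ≤ nz p c i b := by
    intro i b; unfold nz; split_ifs <;> linarith
  have step : Ew (nz p c) (fun D =>
      if uPr (fun x : Q => D x = c x) ≥ 1/2 + ε then 0 else 1)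
      ≤ Ew (nz p c) (fun D => ∏ i, φ i (D i)) := by
    apply Ew_mono hw0
    intro D
    split_ifs with hu
    · exact Finset.prod_nonneg fun i _ => (Real.exp_pos _).le
    · push Not at hu
      rw [hφ]
      simp only
      rw [← Real.exp_sum]
      apply Real.one_le_exp
      rw [Finset.sum_sub_distrib, ← Finset.mul_sum, Finset.sum_sub_distrib]
      simp only [Finset.sum_const, Finset.card_univ, nsmul_eq_mul, Finset.sum_boole]
      unfold uPr at hu
      rw [Fintype.card_subtype] at hu
      set M := (Fintype.card Q : ℝ) with hM
      rcases (Nat.cast_nonneg (α := ℝ) (Fintype.card Q)).lt_or_eq with hM0 | hM0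
      · rw [div_lt_iff₀ hM0] at hu
        have : ((Finset.univ.filter (fun x => D x = c x)).card : ℝ) < (1/2 + ε) * M := by
          convert hu
        nlinarith
      · rw [← hM] at hM0
        have : (Finset.univ.filter (fun x => D x = c x)).card ≤ Fintype.card Q := Finset.card_le_univ _
        have h2 : ((Finset.univ.filter (fun x => D x = c x)).card : ℝ) ≤ M := Nat.cast_le.2 (by convert this)
        rw [← hM0] at h2 ⊢
        nlinarith
  refine step.trans ?_
  rw [Ew_prod]
  have each : ∀ i, nz p c i true * φ i true + nz p c i false * φ i false ≤ Real.exp (-ε^2) := by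
    intro i
    have e : nz p c i true * φ i true + nz p c i false * φ i false
        = Real.exp (-2*ε^2) * (p * Real.exp (2*ε*(p-1)) + (1-p) * Real.exp (2*ε*p)) := by
      rw [hφ]
      simp only [nz]
      rw [mul_add, mul_left_comm, mul_left_comm _ (1-p), ← Real.exp_add, ← Real.exp_add]
      cases c i <;> simp <;> ring_nf
    rw [e]
    have b1 : Real.exp (2*ε*(p-1)) ≤ 1 + 2*ε*(p-1) + (2*ε*(p-1))^2 := by
      have := Real.abs_exp_sub_one_sub_id_le (x := 2*ε*(p-1)) (by rw [abs_le]; constructor <;> nlinarith)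
      have := (abs_le.1 this).2
      linarith
    have b2 : Real.exp (2*ε*p) ≤ 1 + 2*ε*p + (2*ε*p)^2 := by
      have := Real.abs_exp_sub_one_sub_id_le (x := 2*ε*p) (by rw [abs_le]; constructor <;> nlinarith)
      have := (abs_le.1 this).2
      linarith
    have b3 : p * Real.exp (2*ε*(p-1)) + (1-p) * Real.exp (2*ε*p) ≤ 1 + ε^2 := by
      have c1 := mul_le_mul_of_nonneg_left b1 (show 0 ≤ p by linarith)
      have c2 := mul_le_mul_of_nonneg_left b2 (show 0 ≤ 1-p by linarith)
      have c3 : p*(1 + 2*ε*(p-1) + (2*ε*(p-1))^2) + (1-p)*(1 + 2*ε*p + (2*ε*p)^2)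
          = 1 + ε^2 * (4 * (p*(1-p))) := by ring
      have c4 : 4 * (p*(1-p)) ≤ 1 := by nlinarith [sq_nonneg (2*p-1)]
      nlinarith [sq_nonneg ε]
    have b4 : 1 + ε^2 ≤ Real.exp (ε^2) := by linarith [Real.add_one_le_exp (ε^2)]
    calc _ ≤ Real.exp (-2*ε^2) * Real.exp (ε^2) :=
          mul_le_mul_of_nonneg_left (b3.trans b4) (Real.exp_pos _).le
      _ = _ := by rw [← Real.exp_add]; ring_nf
  calc _ ≤ ∏ _i : Q, Real.exp (-ε^2) := Finset.prod_le_prod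
        (fun i _ => add_nonneg (mul_nonneg (hw0 _ _) (Real.exp_pos _).le)
          (mul_nonneg (hw0 _ _) (Real.exp_pos _).le)) (fun i _ => each i)
    _ = _ := by
      rw [Finset.prod_const, Finset.card_univ, ← Real.exp_nat_mul]; ring_nf


abbrev TT {q ℓ ℓ' a : ℕ} (Red : OracleProc q ((Fin ℓ → Bool) × (Fin a → Bool)) (Fin ℓ' → Bool))
    (f : (Fin ℓ → Bool) → Bool) (α : Fin a → Bool) :
    (Fin ℓ → Bool) → ((Fin ℓ' → Bool) → Bool) → Bool :=
  fun x D => (OracleProc.run Red D (x, α) == f x)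

lemma exists_alpha {q ℓ ℓ' a : ℕ} {ε : ℝ}
    (Con : ((Fin ℓ → Bool) → Bool) → (Fin ℓ' → Bool) → Bool)
    (Red : OracleProc q ((Fin ℓ → Bool) × (Fin a → Bool)) (Fin ℓ' → Bool))
    (hB : ∀ (f : (Fin ℓ → Bool) → Bool) (D : (Fin ℓ' → Bool) → Bool),
            uPr (fun x : Fin ℓ' → Bool => D x = Con f x) ≥ 1 / 2 + ε →
            ∃ α : Fin a → Bool, ∀ x : Fin ℓ → Bool, OracleProc.run Red D (x, α) = f x)
    (h0 : 0 < ε) (h1 : ε ≤ 1 / 10) (hM : 16 ≤ ε ^ 2 * 2 ^ ℓ') (f : (Fin ℓ → Bool) → Bool) :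
    ∃ α : Fin a → Bool, (63 / 64) / 2 ^ a ≤
      Ew (nz (1/2 + 2 * ε) (Con f)) (gF (TT Red f α) Finset.univ) := by
  by_contra hcon
  push Not at hcon
  have hch := chern h0 h1 (Con f)
  set w := nz (1/2 + 2 * ε) (Con f) with hw
  have hw0 : ∀ i b, 0 ≤ w i b := by
    intro i b; simp only [hw, nz]; split_ifs <;> linarith
  have hw1 : ∀ i, w i true + w i false = 1 := by
    intro i; simp only [hw, nz]; cases Con f i <;> simp
  have hexp : Real.exp (-ε^2 * (Fintype.card (Fin ℓ' → Bool) : ℝ)) ≤ 1/64 := by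
    have e1 : (Fintype.card (Fin ℓ' → Bool) : ℝ) = 2 ^ ℓ' := by simp
    rw [e1]
    have e2 : Real.exp (-ε^2 * 2^ℓ') ≤ Real.exp (-16) := Real.exp_le_exp.2 (by linarith)
    have e3 : Real.exp (-16) = (Real.exp 8 * Real.exp 8)⁻¹ := by
      rw [← Real.exp_add, ← Real.exp_neg]; norm_num
    have e4 : (9:ℝ) ≤ Real.exp 8 := by linarith [Real.add_one_le_exp (8:ℝ)]
    have e5 : (Real.exp 8 * Real.exp 8)⁻¹ ≤ (64:ℝ)⁻¹ := by
      apply inv_anti₀ (by norm_num); nlinarith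
    linarith
  have hsum : Ew w (fun _ => 1) ≤ Ew w (fun D => ∑ j ∈ (Finset.univ : Finset (Option (Fin a → Bool))),
      (match j with
      | none => (if uPr (fun x => D x = Con f x) ≥ 1/2 + ε then 0 else 1)
      | some α => gF (TT Red f α) Finset.univ D)) := by
    apply Ew_mono hw0
    intro D
    rw [Fintype.sum_option]
    have hnn : ∀ α, 0 ≤ gF (TT Red f α) Finset.univ D := fun α => gF_nonneg _ _ _
    have hs := Finset.sum_nonneg (s := Finset.univ) (fun α _ => hnn α)
    by_cases hu : uPr (fun x => D x = Con f x) ≥ 1/2 + ε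
    · obtain ⟨α, hα⟩ := hB f D hu
      have : gF (TT Red f α) Finset.univ D = 1 := by
        rw [gF_eq, if_pos]; intro x _; simp [hα x]
      have h2 := Finset.single_le_sum (s := Finset.univ) (fun α _ => hnn α) (Finset.mem_univ α)
      simp only [hu, if_true]
      linarith
    · simp only [hu, if_false]
      linarith
  rw [Ew_one w hw1, Ew_sum, Fintype.sum_option] at hsum
  simp only at hsum
  have hlt : ∑ α : Fin a → Bool, Ew w (fun D => gF (TT Red f α) Finset.univ D)
      < ∑ α : Fin a → Bool, (63 / 64 : ℝ) / 2 ^ a :=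
    Finset.sum_lt_sum_of_nonempty Finset.univ_nonempty (fun α _ => hcon α)
  rw [Finset.sum_const] at hlt
  simp only [Finset.card_univ, Fintype.card_fun, Fintype.card_bool, Fintype.card_fin, nsmul_eq_mul,
    Nat.cast_pow, Nat.cast_ofNat] at hlt
  rw [mul_div_cancel₀ _ (by positivity)] at hlt
  linarith

lemma counting {q ℓ ℓ' a : ℕ} {γ : ℝ}
    (Red : OracleProc q ((Fin ℓ → Bool) × (Fin a → Bool)) (Fin ℓ' → Bool))
    (h : ∀ f, ∃ α, γ ≤ Ew (fun _ _ => 1/2) (gF (TT Red f α) Finset.univ)) :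
    2 ^ (2 ^ ℓ) * γ ≤ 2 ^ a := by
  have hu0 : ∀ (i : Fin ℓ' → Bool) (b : Bool), (0:ℝ) ≤ (fun _ _ => 1/2 : (Fin ℓ' → Bool) → Bool → ℝ) i b := by
    intro i b; norm_num
  have hu1 : ∀ (i : Fin ℓ' → Bool), (fun _ _ => 1/2 : (Fin ℓ' → Bool) → Bool → ℝ) i true
      + (fun _ _ => 1/2 : (Fin ℓ' → Bool) → Bool → ℝ) i false = 1 := by
    intro i; norm_num
  have key : ∀ α, ∑ f, Ew (fun _ _ => 1/2) (gF (TT Red f α) Finset.univ) ≤ 1 := by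
    intro α
    have := Ew_sum Finset.univ (fun (_ : Fin ℓ' → Bool) (_ : Bool) => (1/2 : ℝ))
      (fun f => gF (TT Red f α) Finset.univ)
    rw [← this]
    refine le_of_le_of_eq ?_ (Ew_one (fun (_ : Fin ℓ' → Bool) (_ : Bool) => (1/2 : ℝ)) hu1)
    apply Ew_mono hu0
    intro D
    rw [Finset.sum_eq_single (fun x => OracleProc.run Red D (x, α))]
    · rw [gF_eq]; split_ifs <;> norm_num
    · intro f _ hf
      rw [gF_eq, if_neg]
      intro hh
      apply hf
      funext x
      have := hh x (Finset.mem_univ x)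
      exact (beq_iff_eq.1 this).symm
    · intro hh; exact absurd (Finset.mem_univ _) hh
  choose A hA using h
  calc (2:ℝ) ^ (2 ^ ℓ) * γ = ∑ f : (Fin ℓ → Bool) → Bool, γ := by simp
    _ ≤ ∑ f, ∑ α, Ew (fun _ _ => 1/2) (gF (TT Red f α) Finset.univ) := by
      apply Finset.sum_le_sum
      intro f _
      refine (hA f).trans ?_
      exact Finset.single_le_sum (f := fun α => Ew (fun _ _ => 1/2) (gF (TT Red f α) Finset.univ))
        (fun α _ => Ew_nonneg hu0 (gF_nonneg _ _)) (Finset.mem_univ (A f))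
    _ = ∑ α, ∑ f, Ew (fun _ _ => 1/2) (gF (TT Red f α) Finset.univ) := Finset.sum_comm
    _ ≤ ∑ α : Fin a → Bool, 1 := Finset.sum_le_sum fun α _ => key α
    _ = 2 ^ a := by simp

lemma part1 {q ℓ a : ℕ} {ε : ℝ} (h0 : 0 < ε) (ha : (a : ℝ) ≤ 2 ^ ℓ / 10)
    (h : (2:ℝ) ^ (2 ^ ℓ) * ((63 / 64) / 2 ^ a / (1 + 4 * ε) ^ (q * 2 ^ ℓ)) ≤ 2 ^ a) :
    (1/10) * (1/ε) ≤ (q:ℝ) := by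
  have hr : 0 < 1 + 4 * ε := by linarith
  have hN : (1:ℝ) ≤ 2 ^ ℓ := one_le_pow₀ (by norm_num)
  have h2 : (2:ℝ) ^ (2 ^ ℓ) * (63/64) ≤ 2 ^ a * 2 ^ a * (1 + 4 * ε) ^ (q * 2 ^ ℓ) := by
    have hp : 0 < (2:ℝ)^a := by positivity
    have hp2 : 0 < (1 + 4 * ε) ^ (q * 2 ^ ℓ) := by positivity
    rw [div_div, ← mul_div_assoc, div_le_iff₀ (by positivity)] at h
    linarith
  have h3 := Real.log_le_log (by positivity) h2
  rw [Real.log_mul (by positivity) (by norm_num), Real.log_mul (by positivity) (by positivity),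
    Real.log_mul (by positivity) (by positivity), Real.log_pow, Real.log_pow, Real.log_pow] at h3
  push_cast at h3
  have h4 : Real.log (1 + 4 * ε) ≤ 4 * ε := by
    have := Real.log_le_sub_one_of_pos hr; linarith
  have h5 : -(1/63) ≤ Real.log (63/64) := by
    have := Real.one_sub_inv_le_log_of_pos (show (0:ℝ) < 63/64 by norm_num)
    norm_num at this ⊢; linarith
  have h6 := Real.log_two_gt_d9
  set N : ℝ := 2 ^ ℓ with hNd
  have h7 : (q * N) * Real.log (1 + 4 * ε) ≤ (q * N) * (4 * ε) :=
    mul_le_mul_of_nonneg_left h4 (by positivity)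
  have h8 : (a:ℝ) * Real.log 2 ≤ N / 10 * Real.log 2 := mul_le_mul_of_nonneg_right ha (by linarith)
  have h9 : N * 0.69 ≤ N * Real.log 2 := mul_le_mul_of_nonneg_left (by linarith) (by linarith)
  have h10 : N * (4/10) ≤ N * (4 * (q * ε)) := by nlinarith
  have h11 := le_of_mul_le_mul_left h10 (by linarith)
  rw [mul_one_div, div_le_iff₀ h0]
  linarith

lemma part2 {q ℓ a : ℕ} (hq : 1 ≤ q)
    (h : (2:ℝ) ^ (2 ^ ℓ) * ((1/2) ^ q) ^ ((a + 1) * 4 ^ q) ≤ 2 ^ a) :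
    (1/4) * ((ℓ : ℝ) - Real.logb 2 (2 * a)) ≤ (q:ℝ) := by
  have h1 : (2:ℝ) ^ (2 ^ ℓ) ≤ 2 ^ (a + q * ((a+1) * 4 ^ q)) := by
    rw [← pow_mul, one_div, inv_pow, ← div_eq_mul_inv, div_le_iff₀ (by positivity)] at h
    rw [pow_add]; exact h
  have h2 : 2 ^ ℓ ≤ a + q * ((a+1) * 4 ^ q) := (pow_le_pow_iff_right₀ (by norm_num)).1 h1
  have hq2 : q ≤ 2 ^ q := Nat.lt_two_pow_self.le
  have h8 : q * 4 ^ q ≤ 8 ^ q := by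
    calc q * 4 ^ q ≤ 2 ^ q * 4 ^ q := Nat.mul_le_mul_right _ hq2
      _ = 8 ^ q := by rw [← mul_pow]; norm_num
  have h16 : 2 * 8 ^ q ≤ 16 ^ q := by
    calc 2 * 8 ^ q ≤ 2 ^ q * 8 ^ q := Nat.mul_le_mul_right _ (by
            calc 2 = 2 ^ 1 := rfl
              _ ≤ 2 ^ q := Nat.pow_le_pow_right (by norm_num) hq)
      _ = 16 ^ q := by rw [← mul_pow]; norm_num
  have h81 : 1 ≤ 8 ^ q := Nat.one_le_pow _ _ (by norm_num)
  rcases Nat.eq_zero_or_pos a with ha | ha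
  · subst ha
    have h3 : 2 ^ ℓ ≤ 2 ^ (4 * q) := by
      rw [pow_mul]; norm_num at h2 ⊢; omega
    have h4 : ℓ ≤ 4 * q := (Nat.pow_le_pow_iff_right (by norm_num)).1 h3
    have h5 : (ℓ:ℝ) ≤ 4 * q := by exact_mod_cast h4
    simp; linarith
  · have h3 : 2 ^ ℓ ≤ 2 * a * 16 ^ q := by
      calc 2 ^ ℓ ≤ a + (a+1) * (q * 4 ^ q) := by linarith
        _ ≤ a * 8 ^ q + (2 * a) * 8 ^ q := by
            apply Nat.add_le_add
            · exact Nat.le_mul_of_pos_right _ h81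
            · exact Nat.mul_le_mul (by omega) h8
        _ ≤ 2 * a * (2 * 8 ^ q) := by nlinarith
        _ ≤ _ := Nat.mul_le_mul_left _ h16
    have h4 : (2:ℝ) ^ ℓ ≤ (2 * a) * 2 ^ (4 * q) := by
      rw [pow_mul]; norm_num; exact_mod_cast h3
    have ha' : (0:ℝ) < a := by exact_mod_cast ha
    have h5 := Real.logb_le_logb_of_le (b := 2) (by norm_num) (by positivity) h4
    rw [Real.logb_mul (by positivity) (by positivity), Real.logb_pow, Real.logb_pow] at h5
    rw [Real.logb_self_eq_one (by norm_num)] at h5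
    push_cast at h5
    linarith

lemma pow_bound (q a : ℕ) : (1 - (1/4 : ℝ) ^ q) ^ ((a + 1) * 4 ^ q) < (63 / 64) / 2 ^ a := by
  have hq1 : ((1:ℝ)/4) ^ q ≤ 1 := pow_le_one₀ (by norm_num) (by norm_num)
  have h1 : (1 - (1/4 : ℝ) ^ q) ≤ Real.exp (-(1/4)^q) := by
    have := Real.add_one_le_exp (-(1/4 : ℝ)^q); linarith
  have h2 : (1 - (1/4 : ℝ) ^ q) ^ (4 ^ q) ≤ 1/2 := by
    calc _ ≤ (Real.exp (-(1/4)^q)) ^ (4^q) := pow_le_pow_left₀ (by linarith) h1 _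
      _ = Real.exp (-1) := by
        rw [← Real.exp_nat_mul]; congr 1; push_cast
        rw [mul_neg, ← mul_pow]; norm_num
      _ ≤ 1/2 := by
        rw [Real.exp_neg, one_div]
        apply inv_anti₀ (by norm_num)
        linarith [Real.add_one_le_exp (1:ℝ)]
  rw [mul_comm, pow_mul]
  calc _ ≤ (1/2 : ℝ) ^ (a+1) := pow_le_pow_left₀ (by
          apply pow_nonneg; linarith) h2 _
    _ = (1/2) / 2 ^ a := by rw [pow_succ, one_div, inv_pow]; ring
    _ < _ := div_lt_div_of_pos_right (by norm_num) (by positivity)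

end HA

/-- Theorem 1.8: lower bound on the number of queries in black-box hardness amplification,
applicable at the extreme high-end. -/
theorem hardness_amplification_query_lower_bound :
    ∃ c₁ c₂ c₃ : ℝ, c₁ > 0 ∧ c₂ > 0 ∧ c₃ > 0 ∧
      ∀ (ℓ ℓ' a q : ℕ) (ε : ℝ)
        (Con : ((Fin ℓ → Bool) → Bool) → (Fin ℓ' → Bool) → Bool)
        (Red : OracleProc q ((Fin ℓ → Bool) × (Fin a → Bool)) (Fin ℓ' → Bool)),
        -- (Con, Red) is a black-box HF ⇒ (1/2+ε)-HF proof: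
        (∀ (f : (Fin ℓ → Bool) → Bool) (D : (Fin ℓ' → Bool) → Bool),
            uPr (fun x : Fin ℓ' → Bool => D x = Con f x) ≥ 1 / 2 + ε →
            ∃ α : Fin a → Bool, ∀ x : Fin ℓ → Bool, OracleProc.run Red D (x, α) = f x) →
        0 < ε → ε ≤ 1 / 10 →
        (ℓ' : ℝ) ≥ Real.logb 2 (1 / ε ^ 2) + c₃ →
        (a : ℝ) ≤ 2 ^ ℓ / 10 →
        (q : ℝ) ≥ max (c₁ * (1 / ε)) (c₂ * ((ℓ : ℝ) - Real.logb 2 (2 * a))) := by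
  refine ⟨1/10, 1/4, 4, by norm_num, by norm_num, by norm_num, ?_⟩
  intro ℓ ℓ' a q ε Con Red hB h0 h1 hl ha
  have hM : 16 ≤ ε ^ 2 * 2 ^ ℓ' := by
    have e1 : Real.logb 2 (1 / ε ^ 2 * 2 ^ 4) ≤ Real.logb 2 (2 ^ ℓ') := by
      rw [Real.logb_mul (by positivity) (by positivity), Real.logb_pow, Real.logb_pow,
        Real.logb_self_eq_one (by norm_num)]
      push_cast
      linarith
    have e2 := (Real.logb_le_logb (by norm_num) (by positivity) (by positivity)).1 e1
    rw [div_mul_eq_mul_div, div_le_iff₀ (by positivity)] at e2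
    norm_num at e2
    linarith
  have hex := HA.exists_alpha Con Red hB h0 h1 hM
  have hq1 : (1/10) * (1/ε) ≤ (q:ℝ) := by
    apply HA.part1 h0 ha
    apply HA.counting Red
    intro f
    obtain ⟨α, hα⟩ := hex f
    refine ⟨α, ?_⟩
    have hd : HA.Dom (1 + 4 * ε) (HA.nz (1/2 + 2 * ε) (Con f)) (fun _ _ => 1/2) := by
      constructor
      · intro i b; unfold HA.nz; split_ifs <;> linarith
      · intro i b; norm_num
      · intro i; unfold HA.nz; cases Con f i <;> simp
      · intro i; norm_num
      · intro i b; unfold HA.nz; split_ifs <;> linarith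
    have := HA.trees_dom (by linarith) (HA.TT Red f α)
      (fun x => HA.isDT_run Red (x, α) (f x)) Finset.univ _ _ hd
    rw [div_le_iff₀ (by positivity)]
    have hc : (Finset.univ : Finset (Fin ℓ → Bool)).card = 2 ^ ℓ := by simp
    rw [hc] at this
    linarith
  have hqpos : 1 ≤ q := by
    by_contra hlt
    have : q = 0 := by omega
    rw [this] at hq1
    have : 0 < (1/10) * (1/ε) := by positivity
    rw [Nat.cast_zero] at hq1
    linarith
  apply max_le hq1
  apply HA.part2 hqpos
  apply HA.counting Red
  intro f
  obtain ⟨α, hα⟩ := hex f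
  refine ⟨α, ?_⟩
  refine HA.trees_good (HA.TT Red f α) (fun x => HA.isDT_run Red (x, α) (f x)) Finset.univ _
    (HA.nz (1/2 + 2 * ε) (Con f)) _ ?_ ((HA.pow_bound q a).trans_le hα)
  constructor
  · intro i b; unfold HA.nz; split_ifs <;> linarith
  · intro i b; norm_num
  · intro i; unfold HA.nz; cases Con f i <;> simp
  · intro i; norm_num
  · intro i b _; unfold HA.nz; split_ifs <;> linarith
  · intro i b _; norm_num
  · intro i b _; unfold HA.nz; split_ifs <;> linarith
end

section
/- There exist constants c₁ > 0 and c₃ > 0 such that the following holds. Let (Con, Red) be a black-box HF⇒(1/2+ε)-HF proof with parameters (ℓ, ℓ', a) whose reduction makes q queries. If 0 < ε ≤ 1/10, a ≤ 2^ℓ/10, and ℓ' ≥ log₂(1/ε²) + c₃, then q ≥ c₁·(1/ε). -/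
open scoped BigOperators

attribute [local instance] Classical.propDecidable

theorem hq_sum_prod {Q : Type*} [Fintype Q] [DecidableEq Q] (g : Q → Bool → ℝ) :
    ∑ D : Q → Bool, ∏ z, g z (D z) = ∏ z, (g z true + g z false) := by
  have h := (Fintype.prod_sum (κ := fun _ : Q => Bool) g).symm
  rw [h]
  simp

theorem hq_cert {Q : Type*} [Fintype Q] [DecidableEq Q] (p : ℝ) (hp : 1 / 2 ≤ p) (hp1 : p ≤ 1) (k : ℕ)
    (c : Q → Bool) (φ : (Q → Bool) → Prop)
    (h : ∀ D, φ D → ∃ S : Finset Q, S.card ≤ k ∧ ∀ D', (∀ z ∈ S, D' z = D z) → φ D') :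
    ∑ D : Q → Bool, (if φ D then ∏ z, (if D z = c z then p else 1 - p) else 0)
      ≤ (2 * p) ^ k * ∑ D : Q → Bool, (if φ D then ∏ _z : Q, (1 / 2 : ℝ) else 0) := by
  have hp0 : 0 < p := by linarith
  set r : ℝ := 1 / (2 * p) with hr
  have hr0 : 0 < r := by positivity
  have hr1 : r ≤ 1 := by rw [hr, div_le_one (by positivity)]; linarith
  have hrp : r * (2 * p) = 1 := by rw [hr]; field_simp
  let K : Q → Bool → Bool → ℝ := fun z b b' =>
    if b = c z then (if b' = b then r else 1 - r) else (if b' = b then 1 else 0)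
  have hK0 : ∀ z b b', 0 ≤ K z b b' := by
    intro z b b'
    simp only [K]
    split_ifs <;> linarith
  have hw0 : ∀ (D : Q → Bool) z, 0 ≤ (if D z = c z then p else 1 - p) := by
    intro D z; split_ifs <;> linarith
  -- lower bound
  have hlow : ∀ D, φ D → r ^ k ≤ ∑ D' : Q → Bool, (if φ D' then ∏ z, K z (D z) (D' z) else 0) := by
    intro D hD
    obtain ⟨S, hS, hS'⟩ := h D hD
    calc r ^ k ≤ r ^ S.card := pow_le_pow_of_le_one hr0.le hr1 hS
      _ = ∏ z : Q, (if z ∈ S then r else 1) := by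
          rw [Finset.prod_ite_mem]; simp
      _ ≤ ∏ z : Q, ((if z ∈ S then (if true = D z then K z (D z) true else 0) else K z (D z) true)
            + (if z ∈ S then (if false = D z then K z (D z) false else 0) else K z (D z) false)) := by
          apply Finset.prod_le_prod
          · intro z _; split_ifs <;> linarith
          · intro z _
            simp only [K]
            rcases hb : D z <;> rcases hc : c z <;> by_cases hz : z ∈ S <;> simp [hz] <;> linarith
      _ = ∑ D' : Q → Bool, ∏ z, (if z ∈ S then (if D' z = D z then K z (D z) (D' z) else 0) else K z (D z) (D' z)) :=
          (hq_sum_prod (fun z b => if z ∈ S then (if b = D z then K z (D z) b else 0) else K z (D z) b)).symm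
      _ ≤ _ := by
          apply Finset.sum_le_sum
          intro D' _
          by_cases hag : ∀ z ∈ S, D' z = D z
          · rw [if_pos (hS' D' hag)]
            apply le_of_eq
            apply Finset.prod_congr rfl
            intro z _
            by_cases hz : z ∈ S
            · simp [hz, hag z hz]
            · simp [hz]
          · push Not at hag
            obtain ⟨z, hz, hne⟩ := hag
            rw [Finset.prod_eq_zero (Finset.mem_univ z) (by simp [hz, hne])]
            split_ifs
            · exact Finset.prod_nonneg (fun z _ => hK0 _ _ _)
            · exact le_rfl
  -- marginal
  have hmarg : ∀ D' : Q → Bool,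
      ∑ D : Q → Bool, (∏ z, (if D z = c z then p else 1 - p)) * ∏ z, K z (D z) (D' z)
        = ∏ _z : Q, (1 / 2 : ℝ) := by
    intro D'
    simp_rw [← Finset.prod_mul_distrib]
    rw [hq_sum_prod (fun z b => (if b = c z then p else 1 - p) * K z b (D' z))]
    apply Finset.prod_congr rfl
    intro z _
    simp only [K]
    rcases D' z <;> rcases c z <;> simp <;> linarith
  have hmain : r ^ k * ∑ D : Q → Bool, (if φ D then ∏ z, (if D z = c z then p else 1 - p) else 0)
      ≤ ∑ D : Q → Bool, (if φ D then ∏ _z : Q, (1 / 2 : ℝ) else 0) := by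
    calc _ = ∑ D : Q → Bool, r ^ k * (if φ D then ∏ z, (if D z = c z then p else 1 - p) else 0) := by
          rw [Finset.mul_sum]
      _ ≤ ∑ D : Q → Bool, (∏ z, (if D z = c z then p else 1 - p)) *
            ∑ D' : Q → Bool, (if φ D' then ∏ z, K z (D z) (D' z) else 0) := by
          apply Finset.sum_le_sum
          intro D _
          have hw : 0 ≤ ∏ z, (if D z = c z then p else 1 - p) :=
            Finset.prod_nonneg (fun z _ => hw0 D z)
          by_cases hD : φ D
          · rw [if_pos hD, mul_comm]
            exact mul_le_mul_of_nonneg_left (hlow D hD) hw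
          · rw [if_neg hD, mul_zero]
            apply mul_nonneg hw
            apply Finset.sum_nonneg
            intro D' _
            split_ifs
            · exact Finset.prod_nonneg (fun z _ => hK0 _ _ _)
            · exact le_rfl
      _ = ∑ D' : Q → Bool, (if φ D' then ∏ _z : Q, (1 / 2 : ℝ) else 0) := by
          simp_rw [Finset.mul_sum]
          rw [Finset.sum_comm]
          apply Finset.sum_congr rfl
          intro D' _
          by_cases hD : φ D'
          · simp only [if_pos hD]
            exact hmarg D'
          · simp [hD]
  calc _ = (2 * p) ^ k * (r ^ k * ∑ D : Q → Bool, (if φ D then ∏ z, (if D z = c z then p else 1 - p) else 0)) := by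
        rw [← mul_assoc, ← mul_pow, mul_comm (2 * p) r, hrp, one_pow, one_mul]
    _ ≤ _ := mul_le_mul_of_nonneg_left hmain (by positivity)

theorem hq_ans_congr {q : ℕ} {I Q : Type*} (P : OracleProc q I Q) (D D' : Q → Bool) (w : I)
    (h : ∀ i : Fin q, D' (P.qry i w (fun j => P.ans D w ⟨j.val, j.isLt.trans i.isLt⟩))
      = D (P.qry i w (fun j => P.ans D w ⟨j.val, j.isLt.trans i.isLt⟩))) :
    P.ans D' w = P.ans D w := by
  have key : ∀ n (hn : n < q), P.ans D' w ⟨n, hn⟩ = P.ans D w ⟨n, hn⟩ := by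
    intro n
    induction n using Nat.strong_induction_on with
    | _ n ih =>
      intro hn
      rw [OracleProc.ans, OracleProc.ans, ← h ⟨n, hn⟩]
      congr 2
      funext j
      exact ih j.val j.isLt _
  funext i
  exact key i.val i.isLt

theorem hq_chernoff {Q : Type*} [Fintype Q] [DecidableEq Q] (ε : ℝ) (h0 : 0 < ε) (h1 : ε ≤ 1 / 10)
    (hM : 4 ≤ (Fintype.card Q : ℝ) * ε ^ 2) (c : Q → Bool) :
    ∑ D : Q → Bool, (if uPr (fun z => D z = c z) ≥ 1 / 2 + ε then 0 else
      ∏ z, (if D z = c z then 1 / 2 + 2 * ε else 1 - (1 / 2 + 2 * ε))) ≤ 1 / 8 := by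
  set M : ℝ := (Fintype.card Q : ℝ) with hMdef
  have hMpos : 0 < M := by
    by_contra hneg
    have : M * ε ^ 2 ≤ 0 := mul_nonpos_of_nonpos_of_nonneg (not_lt.mp hneg) (by positivity)
    linarith
  set s : ℝ := 2 * ε with hs
  let g : Q → Bool → ℝ := fun z b =>
    (if b = c z then 1 / 2 + 2 * ε else 1 - (1 / 2 + 2 * ε)) *
      Real.exp (2 * ε * s - s * (if b = c z then 1 else -1))
  have step : ∀ D : Q → Bool, (if uPr (fun z => D z = c z) ≥ 1 / 2 + ε then 0 else
      ∏ z, (if D z = c z then 1 / 2 + 2 * ε else 1 - (1 / 2 + 2 * ε))) ≤ ∏ z, g z (D z) := by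
    intro D
    have hwn : 0 ≤ ∏ z, (if D z = c z then 1 / 2 + 2 * ε else 1 - (1 / 2 + 2 * ε)) := by
      apply Finset.prod_nonneg
      intro z _
      split_ifs <;> linarith
    split_ifs with hu
    · apply Finset.prod_nonneg
      intro z _
      apply mul_nonneg _ (Real.exp_pos _).le
      split_ifs <;> linarith
    · simp only [g]
      rw [Finset.prod_mul_distrib]
      apply le_mul_of_one_le_right hwn
      rw [← Real.exp_sum, Real.one_le_exp_iff, Finset.sum_sub_distrib,
        ← Finset.mul_sum Finset.univ (fun z => if D z = c z then (1 : ℝ) else -1) s]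
      have hcard : ∑ z : Q, (if D z = c z then (1 : ℝ) else -1)
          = 2 * (Fintype.card {z : Q // D z = c z} : ℝ) - M := by
        have e1 : ∀ z : Q, (if D z = c z then (1 : ℝ) else -1) = 2 * (if D z = c z then (1 : ℝ) else 0) - 1 := by
          intro z; split_ifs <;> norm_num
        simp_rw [e1]
        rw [Finset.sum_sub_distrib, ← Finset.mul_sum, Finset.sum_boole, Fintype.card_subtype]
        simp [hMdef]
      rw [hcard]
      simp only [uPr, ge_iff_le, not_le] at hu
      rw [div_lt_iff₀ hMpos] at hu
      simp only [Finset.sum_const, Finset.card_univ, nsmul_eq_mul]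
      rw [← hMdef]
      have hs0 : 0 < s := by positivity
      have hu' : (Fintype.card {z : Q // D z = c z} : ℝ) < (1 / 2 + ε) * M := by
        refine lt_of_le_of_lt (le_of_eq ?_) hu
        exact congrArg Nat.cast (@Fintype.card_congr _ _ (_) (_) (Equiv.refl _))
      have := mul_lt_mul_of_pos_left hu' hs0
      nlinarith
  calc _ ≤ ∑ D : Q → Bool, ∏ z, g z (D z) := Finset.sum_le_sum (fun D _ => step D)
    _ = ∏ z, (g z true + g z false) := hq_sum_prod g
    _ ≤ ∏ _z : Q, Real.exp (-(3 / 2) * ε ^ 2) := by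
        apply Finset.prod_le_prod
        · intro z _
          have : ∀ b, 0 ≤ g z b := by
            intro b
            apply mul_nonneg _ (Real.exp_pos _).le
            split_ifs <;> linarith
          exact add_nonneg (this _) (this _)
        · intro z _
          have e1 : g z true + g z false = Real.exp (2 * ε * s) * (Real.cosh s - 4 * ε * Real.sinh s) := by
            rw [Real.cosh_eq, Real.sinh_eq]
            simp only [g]
            rcases c z <;> simp [sub_eq_add_neg, Real.exp_add] <;> ring
          rw [e1]
          have hc := Real.cosh_le_exp_half_sq s
          have hsh : s ≤ Real.sinh s := Real.self_le_sinh_iff.mpr (by positivity)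
          have hu0 : 0 < ε ^ 2 := by positivity
          have hu1 : ε ^ 2 ≤ 1 / 100 := by nlinarith
          have a1 : Real.exp (2 * ε * s) * (Real.cosh s - 4 * ε * Real.sinh s)
              ≤ Real.exp (4 * ε ^ 2) * (Real.exp (2 * ε ^ 2) - 8 * ε ^ 2) := by
            have : 2 * ε * s = 4 * ε ^ 2 := by rw [hs]; ring
            rw [this]
            apply mul_le_mul_of_nonneg_left _ (Real.exp_pos _).le
            have : s ^ 2 / 2 = 2 * ε ^ 2 := by rw [hs]; ring
            rw [this] at hc
            nlinarith
          have a2 : Real.exp (4 * ε ^ 2) * (Real.exp (2 * ε ^ 2) - 8 * ε ^ 2)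
              ≤ Real.exp (6 * ε ^ 2) - 8 * ε ^ 2 := by
            rw [mul_sub, ← Real.exp_add]
            have : (1 : ℝ) ≤ Real.exp (4 * ε ^ 2) := Real.one_le_exp (by positivity)
            have e : 4 * ε ^ 2 + 2 * ε ^ 2 = 6 * ε ^ 2 := by ring
            rw [e]
            nlinarith
          have a3 : Real.exp (6 * ε ^ 2) ≤ 1 + 13 / 2 * ε ^ 2 := by
            have b1 := Real.add_one_le_exp (-(6 * ε ^ 2))
            have b2 : Real.exp (6 * ε ^ 2) * Real.exp (-(6 * ε ^ 2)) = 1 := by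
              rw [← Real.exp_add]; simp
            have b3 := Real.exp_pos (6 * ε ^ 2)
            have b4 : Real.exp (6 * ε ^ 2) * (1 - 6 * ε ^ 2) ≤ 1 := by nlinarith
            have b5 : (1 : ℝ) ≤ (1 + 13 / 2 * ε ^ 2) * (1 - 6 * ε ^ 2) := by nlinarith
            exact le_of_mul_le_mul_right (b4.trans b5) (by linarith)
          have a4 := Real.add_one_le_exp (-(3 / 2) * ε ^ 2)
          linarith
    _ = Real.exp (-(3 / 2) * (M * ε ^ 2)) := by
        rw [Finset.prod_const, Finset.card_univ, ← Real.exp_nat_mul, ← hMdef]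
        congr 1; ring
    _ ≤ Real.exp (-6) := by
        apply Real.exp_le_exp.mpr; linarith
    _ ≤ 1 / 8 := by
        have b1 := Real.add_one_le_exp (2 : ℝ)
        have b2 : Real.exp (-6) * (Real.exp 2) ^ 3 = 1 := by
          rw [← Real.exp_nat_mul, ← Real.exp_add]; norm_num
        have b3 : (3 : ℝ) ^ 3 ≤ (Real.exp 2) ^ 3 := pow_le_pow_left₀ (by norm_num) (by linarith) 3
        have := Real.exp_pos (-6)
        nlinarith

/-- Theorem 4.1: lower bound of `Ω(1/ε)` on the number of queries in black-box hardness
amplification, applicable at the extreme high-end. -/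
theorem hardness_amplification_query_lower_bound_eps :
    ∃ c₁ c₃ : ℝ, c₁ > 0 ∧ c₃ > 0 ∧
      ∀ (ℓ ℓ' a q : ℕ) (ε : ℝ)
        (Con : ((Fin ℓ → Bool) → Bool) → (Fin ℓ' → Bool) → Bool)
        (Red : OracleProc q ((Fin ℓ → Bool) × (Fin a → Bool)) (Fin ℓ' → Bool)),
        -- (Con, Red) is a black-box HF ⇒ (1/2+ε)-HF proof:
        (∀ (f : (Fin ℓ → Bool) → Bool) (D : (Fin ℓ' → Bool) → Bool),
            uPr (fun x : Fin ℓ' → Bool => D x = Con f x) ≥ 1 / 2 + ε →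
            ∃ α : Fin a → Bool, ∀ x : Fin ℓ → Bool, OracleProc.run Red D (x, α) = f x) →
        0 < ε → ε ≤ 1 / 10 →
        (a : ℝ) ≤ 2 ^ ℓ / 10 →
        (ℓ' : ℝ) ≥ Real.logb 2 (1 / ε ^ 2) + c₃ →
        (q : ℝ) ≥ c₁ * (1 / ε) := by
  refine ⟨1 / 20, 2, by norm_num, by norm_num, ?_⟩
  intro ℓ ℓ' a q ε Con Red hbb h0 h1 ha hl
  by_contra hq
  rw [ge_iff_le, not_le] at hq
  have hq' : (q : ℝ) * ε < 1 / 20 := by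
    have := mul_lt_mul_of_pos_right hq h0
    rwa [mul_assoc, one_div_mul_cancel h0.ne', mul_one] at this
  have hM : 4 ≤ (Fintype.card (Fin ℓ' → Bool) : ℝ) * ε ^ 2 := by
    have e1 : (Fintype.card (Fin ℓ' → Bool) : ℝ) = (2 : ℝ) ^ (ℓ' : ℝ) := by
      simp
    rw [e1]
    have e2 : (2 : ℝ) ^ (Real.logb 2 (1 / ε ^ 2) + 2) ≤ (2 : ℝ) ^ (ℓ' : ℝ) :=
      Real.rpow_le_rpow_of_exponent_le (by norm_num) hl
    rw [Real.rpow_add (by norm_num), Real.rpow_logb (by norm_num) (by norm_num) (by positivity)] at e2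
    have e3 : (1 / ε ^ 2 * (2 : ℝ) ^ (2 : ℝ)) * ε ^ 2 = 4 := by
      have : (2 : ℝ) ^ (2 : ℝ) = 4 := by norm_num
      rw [this]; field_simp
    rw [← e3]
    exact mul_le_mul_of_nonneg_right e2 (by positivity)
  set N : ℕ := 2 ^ ℓ with hN
  set p : ℝ := 1 / 2 + 2 * ε with hp
  have hp12 : 1 / 2 ≤ p := by linarith
  have hp1 : p ≤ 1 := by linarith
  let W : ((Fin ℓ → Bool) → Bool) → ((Fin ℓ' → Bool) → Bool) → ℝ :=
    fun f D => ∏ z, (if D z = Con f z then p else 1 - p)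
  obtain ⟨φ, hφd⟩ : ∃ φ : ((Fin ℓ → Bool) → Bool) → (Fin a → Bool) → ((Fin ℓ' → Bool) → Bool) → Prop,
      ∀ f α D, φ f α D ↔ ∀ x, Red.run D (x, α) = f x := ⟨fun f α D => ∀ x, Red.run D (x, α) = f x,
        fun _ _ _ => Iff.rfl⟩
  have hW0 : ∀ f D, 0 ≤ W f D := by
    intro f D
    apply Finset.prod_nonneg
    intro z _
    split_ifs <;> linarith
  have hWsum : ∀ f, ∑ D, W f D = 1 := by
    intro f
    rw [show ∑ D, W f D = _ from hq_sum_prod (fun z b => if b = Con f z then p else 1 - p)]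
    apply Finset.prod_eq_one
    intro z _
    rcases Con f z <;> simp
  have hlow : ∀ f, 7 / 8 ≤ ∑ α, ∑ D, (if φ f α D then W f D else 0) := by
    intro f
    have hch := hq_chernoff ε h0 h1 hM (Con f)
    have : ∑ D, W f D ≤ ∑ D, ((if uPr (fun z => D z = Con f z) ≥ 1 / 2 + ε then 0 else W f D)
        + ∑ α, (if φ f α D then W f D else 0)) := by
      apply Finset.sum_le_sum
      intro D _
      have hnn : ∀ α, 0 ≤ (if φ f α D then W f D else 0) := by
        intro α
        split_ifs
        · exact hW0 f D
        · exact le_rfl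
      split_ifs with hu
      · obtain ⟨α, hα⟩ := hbb f D hu
        have := Finset.single_le_sum (f := fun α => (if φ f α D then W f D else 0))
          (fun α _ => hnn α) (Finset.mem_univ α)
        have hφ : φ f α D := (hφd f α D).2 hα
        simp only [if_pos hφ] at this
        linarith
      · have := Finset.sum_nonneg (s := Finset.univ) (fun α _ => hnn α)
        linarith
    rw [hWsum, Finset.sum_add_distrib, Finset.sum_comm] at this
    linarith
  have hup : ∀ f α, ∑ D, (if φ f α D then W f D else 0) ≤
      (2 * p) ^ (N * q) * ∑ D, (if φ f α D then ∏ _z : Fin ℓ' → Bool, (1 / 2 : ℝ) else 0) := by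
    intro f α
    refine hq_cert p hp12 hp1 (N * q) (Con f) (φ f α) ?_
    intro D hD
    refine ⟨(Finset.univ : Finset ((Fin ℓ → Bool) × Fin q)).image (fun t =>
      Red.qry t.2 (t.1, α) (fun j => Red.ans D (t.1, α) ⟨j.val, j.isLt.trans t.2.isLt⟩)), ?_, ?_⟩
    · refine Finset.card_image_le.trans ?_
      simp [hN]
    · intro D' hD'
      rw [hφd] at hD ⊢
      intro x
      rw [← hD x]
      unfold OracleProc.run
      rw [hq_ans_congr Red D D' (x, α)]
      intro i
      exact hD' _ (Finset.mem_image.mpr ⟨(x, i), Finset.mem_univ _, rfl⟩)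
  have hfin : ∑ f, ∑ α, ∑ D, (if φ f α D then ∏ _z : Fin ℓ' → Bool, (1 / 2 : ℝ) else 0) = 2 ^ a := by
    rw [Finset.sum_comm]
    have : ∀ α, ∑ f, ∑ D, (if φ f α D then ∏ _z : Fin ℓ' → Bool, (1 / 2 : ℝ) else 0) = 1 := by
      intro α
      rw [Finset.sum_comm]
      have e : ∀ D, ∑ f, (if φ f α D then ∏ _z : Fin ℓ' → Bool, (1 / 2 : ℝ) else 0)
          = ∏ _z : Fin ℓ' → Bool, (1 / 2 : ℝ) := by
        intro D
        have e2 : ∀ f, φ f α D ↔ (fun x => Red.run D (x, α)) = f := by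
          intro f
          rw [hφd]
          exact funext_iff.symm
        simp_rw [e2]
        rw [Finset.sum_ite_eq]
        simp
      simp_rw [e]
      rw [hq_sum_prod (fun _ _ => (1 / 2 : ℝ))]
      norm_num
    simp_rw [this]
    simp
  have hmain : 7 / 8 * (2 : ℝ) ^ N ≤ (2 * p) ^ (N * q) * 2 ^ a := by
    calc 7 / 8 * (2 : ℝ) ^ N = ∑ _f : (Fin ℓ → Bool) → Bool, (7 / 8 : ℝ) := by
          simp [hN, mul_comm]
      _ ≤ ∑ f, ∑ α, ∑ D, (if φ f α D then W f D else 0) := Finset.sum_le_sum (fun f _ => hlow f)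
      _ ≤ ∑ f, ∑ α, (2 * p) ^ (N * q) * ∑ D, (if φ f α D then ∏ _z : Fin ℓ' → Bool, (1 / 2 : ℝ) else 0) :=
          Finset.sum_le_sum (fun f _ => Finset.sum_le_sum (fun α _ => hup f α))
      _ = _ := by
          simp_rw [← Finset.mul_sum]
          rw [hfin]
  have hN1 : (1 : ℝ) ≤ N := by
    rw [hN]; push_cast; exact one_le_pow₀ (by norm_num)
  have haN : (a : ℝ) ≤ N / 10 := by rw [hN]; push_cast; exact ha
  have hl1 := Real.log_two_gt_d9
  have hl2 := Real.log_two_lt_d9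
  have t1 : (2 * p) ^ (N * q) ≤ Real.exp (1 / 5 * N) := by
    have u1 : 2 * p ≤ Real.exp (4 * ε) := by
      have := Real.add_one_le_exp (4 * ε)
      rw [hp]; linarith
    calc (2 * p) ^ (N * q) ≤ (Real.exp (4 * ε)) ^ (N * q) := pow_le_pow_left₀ (by linarith) u1 _
      _ = Real.exp (4 * ((q : ℝ) * ε) * N) := by
          rw [← Real.exp_nat_mul]; congr 1; push_cast; ring
      _ ≤ _ := by
          apply Real.exp_le_exp.mpr
          apply mul_le_mul_of_nonneg_right _ (by linarith)
          linarith
  have t0 : ∀ n : ℕ, (2 : ℝ) ^ n = Real.exp (n * Real.log 2) := by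
    intro n
    rw [Real.exp_nat_mul, Real.exp_log (by norm_num)]
  have t2 : (2 : ℝ) ^ a ≤ Real.exp (1 / 10 * N) := by
    rw [t0]
    apply Real.exp_le_exp.mpr
    have : (a : ℝ) * Real.log 2 ≤ a * 1 := mul_le_mul_of_nonneg_left (by linarith) (by positivity)
    linarith
  have t3 : Real.exp (1 / 5 * N) * Real.exp (1 / 10 * N) * (1 + 3 / 10) ≤ (2 : ℝ) ^ N := by
    have v := Real.add_one_le_exp (3 / 10 : ℝ)
    calc _ ≤ Real.exp (1 / 5 * N) * Real.exp (1 / 10 * N) * Real.exp (3 / 10) :=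
          mul_le_mul_of_nonneg_left (by linarith) (by positivity)
      _ = Real.exp (3 / 10 * N + 3 / 10) := by
          rw [← Real.exp_add, ← Real.exp_add]; congr 1; ring
      _ ≤ _ := by
          rw [t0]
          apply Real.exp_le_exp.mpr
          nlinarith
  have t4 : (2 * p) ^ (N * q) * 2 ^ a ≤ Real.exp (1 / 5 * N) * Real.exp (1 / 10 * N) :=
    mul_le_mul t1 t2 (by positivity) (by positivity)
  have t5 : 0 < Real.exp (1 / 5 * N) * Real.exp (1 / 10 * N) := by positivity
  linarith
end

section
/- There exists a constant c₃ > 0 such that the following holds. Let (Con, Red) be a black-box HF⇒(1/2+ε)-HF proof with parameters (ℓ, ℓ', a) whose reduction makes q queries. If 0 < ε ≤ 1/10 and ℓ' ≥ log₂(1/ε²) + c₃, then q ≥ (ℓ − log₂(2a))/3. -/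
open scoped BigOperators

attribute [local instance] Classical.propDecidable

namespace HAQ

section
variable {X Y : Type} [Fintype X] [Fintype Y]

def Agr (H : Finset Y) (u D : Y → Bool) : Prop := ∀ y ∈ H, D y = u y

noncomputable def Wt (μ : (Y → Bool) → ℝ) (E : (Y → Bool) → Prop) : ℝ :=
  ∑ D, if E D then μ D else 0

def Good (μ : (Y → Bool) → ℝ) : Prop :=
  (∀ D, 0 ≤ μ D) ∧ ∀ D y b, μ (Function.update D y b) ≤ 2 * μ D

def Indep (E : (Y → Bool) → Prop) (y : Y) : Prop :=
  ∀ D b, E (Function.update D y b) ↔ E D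

lemma Wt_nonneg {μ : (Y → Bool) → ℝ} (hμ : Good μ) (E : (Y → Bool) → Prop) : 0 ≤ Wt μ E := by
  unfold Wt
  refine Finset.sum_nonneg fun D _ => ?_
  split_ifs
  · exact hμ.1 D
  · exact le_rfl

lemma Wt_mono {μ : (Y → Bool) → ℝ} (hμ : Good μ) {E E' : (Y → Bool) → Prop}
    (h : ∀ D, E D → E' D) : Wt μ E ≤ Wt μ E' := by
  unfold Wt
  refine Finset.sum_le_sum fun D _ => ?_
  by_cases h1 : E D
  · simp [h1, h D h1]
  · simp only [h1, if_false]
    split_ifs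
    · exact hμ.1 D
    · exact le_rfl

lemma Wt_split (μ : (Y → Bool) → ℝ) (E P : (Y → Bool) → Prop) :
    Wt μ E = Wt μ (fun D => E D ∧ P D) + Wt μ (fun D => E D ∧ ¬ P D) := by
  unfold Wt
  rw [← Finset.sum_add_distrib]
  refine Finset.sum_congr rfl fun D _ => ?_
  by_cases h1 : E D <;> by_cases h2 : P D <;> simp [h1, h2]

lemma Wt_union {Al : Type} [Fintype Al] {μ : (Y → Bool) → ℝ} (hμ : Good μ)
    (E : (Y → Bool) → Prop) (E' : Al → (Y → Bool) → Prop) (h : ∀ D, E D → ∃ α, E' α D) :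
    Wt μ E ≤ ∑ α, Wt μ (E' α) := by
  unfold Wt
  rw [Finset.sum_comm]
  refine Finset.sum_le_sum fun D _ => ?_
  have nn : ∀ α ∈ (Finset.univ : Finset Al), (0:ℝ) ≤ if E' α D then μ D else 0 := by
    intro α _
    split_ifs
    · exact hμ.1 D
    · exact le_rfl
  split_ifs with hD
  · obtain ⟨α, hα⟩ := h D hD
    have := Finset.single_le_sum nn (Finset.mem_univ α)
    rwa [if_pos hα] at this
  · exact Finset.sum_nonneg nn

noncomputable def flipAt (y : Y) (D : Y → Bool) : Y → Bool := Function.update D y (!(D y))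

lemma flipAt_invol (y : Y) : Function.Involutive (flipAt y) := by
  intro D
  unfold flipAt
  simp

lemma single {μ : (Y → Bool) → ℝ} (hμ : Good μ) (E : (Y → Bool) → Prop) (y : Y) (b : Bool)
    (hE : Indep E y) : Wt μ E ≤ 3 * Wt μ (fun D => E D ∧ D y = b) := by
  rw [Wt_split μ E (fun D => D y = b)]
  have : Wt μ (fun D => E D ∧ ¬ D y = b) ≤ 2 * Wt μ (fun D => E D ∧ D y = b) := by
    unfold Wt
    rw [Finset.mul_sum]
    rw [← Equiv.sum_comp (flipAt_invol y).toPerm]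
    refine Finset.sum_le_sum fun D _ => ?_
    have h1 : E (flipAt y D) ↔ E D := hE D _
    have h2 : (¬ (flipAt y D) y = b) ↔ D y = b := by
      unfold flipAt
      simp
    simp only [Function.Involutive.coe_toPerm, h1, h2]
    split_ifs
    · exact hμ.2 D y _
    · simp
  linarith

lemma multi {μ : (Y → Bool) → ℝ} (hμ : Good μ) (E : (Y → Bool) → Prop) (R : Finset Y)
    (u : Y → Bool) (hE : ∀ y ∈ R, Indep E y) :
    Wt μ E ≤ 3 ^ R.card * Wt μ (fun D => E D ∧ Agr R u D) := by
  induction R using Finset.induction_on with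
  | empty => simp [Agr]
  | insert y R hy ih =>
    have h1 := ih (fun z hz => hE z (Finset.mem_insert_of_mem hz))
    have h2 := single hμ (fun D => E D ∧ Agr R u D) y (u y) (by
      intro D b
      have e1 := hE y (Finset.mem_insert_self _ _) D b
      have e2 : Agr R u (Function.update D y b) ↔ Agr R u D := by
        unfold Agr
        refine forall₂_congr fun z hz => ?_
        have : z ≠ y := fun h => hy (h ▸ hz)
        rw [Function.update_of_ne this]
      exact and_congr e1 e2)
    have h3 : (fun D => (E D ∧ Agr R u D) ∧ D y = u y) = (fun D => E D ∧ Agr (insert y R) u D) := by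
      funext D
      unfold Agr
      rw [Finset.forall_mem_insert]
      apply propext
      tauto
    rw [h3] at h2
    rw [Finset.card_insert_of_notMem hy, pow_succ, mul_assoc]
    exact h1.trans (mul_le_mul_of_nonneg_left h2 (by positivity))

lemma caseB {ι : Type} {μ : (Y → Bool) → ℝ} (hμ : Good μ) (q : ℕ) (E : (Y → Bool) → Prop)
    (s : Finset ι) (R : ι → Finset Y) (u : ι → Y → Bool)
    (hE : ∀ i ∈ s, ∀ y ∈ R i, Indep E y) (hq : ∀ i ∈ s, (R i).card ≤ q)
    (hd : ∀ i ∈ s, ∀ j ∈ s, i ≠ j → Disjoint (R i) (R j)) :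
    Wt μ (fun D => E D ∧ ∀ i ∈ s, ¬ Agr (R i) (u i) D) ≤ (1 - (1/3:ℝ)^q) ^ s.card * Wt μ E := by
  induction s using Finset.induction_on with
  | empty => simp
  | insert i s hi ih =>
    have h1 := ih (fun j hj => hE j (Finset.mem_insert_of_mem hj))
      (fun j hj => hq j (Finset.mem_insert_of_mem hj))
      (fun j hj k hk => hd j (Finset.mem_insert_of_mem hj) k (Finset.mem_insert_of_mem hk))
    set E' : (Y → Bool) → Prop := fun D => E D ∧ ∀ i ∈ s, ¬ Agr (R i) (u i) D with hE'
    have h2 := multi hμ E' (R i) (u i) (by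
      intro y hy D b
      have e1 := hE i (Finset.mem_insert_self _ _) y hy D b
      refine and_congr e1 (forall₂_congr fun j hj => not_congr ?_)
      unfold Agr
      refine forall₂_congr fun z hz => ?_
      have : z ≠ y := by
        rintro rfl
        have := hd i (Finset.mem_insert_self _ _) j (Finset.mem_insert_of_mem hj)
          (fun h => hi (h ▸ hj))
        exact Finset.disjoint_left.1 this hy hz
      rw [Function.update_of_ne this])
    have h3 := Wt_split μ E' (Agr (R i) (u i))
    have h4 : (fun D => E D ∧ ∀ j ∈ insert i s, ¬ Agr (R j) (u j) D) =
        (fun D => E' D ∧ ¬ Agr (R i) (u i) D) := by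
      funext D
      rw [Finset.forall_mem_insert]
      apply propext
      simp only [hE']
      tauto
    rw [h4, Finset.card_insert_of_notMem hi, pow_succ]
    have n1 := Wt_nonneg hμ (fun D => E' D ∧ Agr (R i) (u i) D)
    have h5 : Wt μ E' ≤ 3 ^ q * Wt μ (fun D => E' D ∧ Agr (R i) (u i) D) :=
      h2.trans (mul_le_mul_of_nonneg_right
        (pow_le_pow_right₀ (by norm_num) (hq i (Finset.mem_insert_self _ _))) n1)
    have h6 : (1/3:ℝ)^q * Wt μ E' ≤ Wt μ (fun D => E' D ∧ Agr (R i) (u i) D) := by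
      have := mul_le_mul_of_nonneg_left h5 (by positivity : (0:ℝ) ≤ (1/3:ℝ)^q)
      rwa [← mul_assoc, ← mul_pow, show (1/3:ℝ)*3 = 1 by norm_num, one_pow, one_mul] at this
    have h7 : (1/3:ℝ)^q ≤ 1 := pow_le_one₀ (by norm_num) (by norm_num)
    have h8 := mul_le_mul_of_nonneg_left h1 (sub_nonneg.2 h7)
    nlinarith

def Inv (g : X → (Y → Bool) → Bool) (cert : X → (Y → Bool) → Finset Y) (k : ℕ)
    (H : Finset Y) (v : Y → Bool) : Prop :=
  ∀ x D0 D1, Agr H v D0 → Agr H v D1 → g x D0 ≠ g x D1 →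
    ((cert x D0 ∪ cert x D1) \ H).card ≤ k

lemma step (g : X → (Y → Bool) → Bool) (cert : X → (Y → Bool) → Finset Y) (q m : ℕ)
    (hcard : ∀ x D, (cert x D).card ≤ q)
    (hcert : ∀ x D D', Agr (cert x D) D D' → g x D' = g x D) (k : ℕ) :
    ∀ H v, Inv g cert k H v → ∃ F : Finset (X → Bool),
      F.card ≤ 2 ^ (m * ∑ i ∈ Finset.range (k+1), i) ∧ ∀ f, f ∉ F → ∀ μ, Good μ →
        Wt μ (fun D => Agr H v D ∧ ∀ x, g x D = f x) ≤ (1 - (1/3:ℝ)^q)^m * Wt μ (Agr H v) := by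
  have h7 : (1/3:ℝ)^q ≤ 1 := pow_le_one₀ (by norm_num) (by norm_num)
  have h7' : (0:ℝ) ≤ (1/3:ℝ)^q := by positivity
  have key : ∀ H v x D0 D1, Agr H v D0 → Agr H v D1 → g x D0 ≠ g x D1 →
      ((cert x D0 ∪ cert x D1) \ H).Nonempty := by
    intro H v x D0 D1 h0 h1 hne
    by_contra hc
    rw [Finset.not_nonempty_iff_eq_empty, Finset.sdiff_eq_empty_iff_subset] at hc
    apply hne
    symm
    apply hcert
    intro y hy
    have := hc (Finset.mem_union_left _ hy)
    rw [h0 y this, h1 y this]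
  induction k with
  | zero =>
    intro H v hI
    refine ⟨{fun x => g x v}, by simp, ?_⟩
    intro f hf μ hμ
    have : (fun D => Agr H v D ∧ ∀ x, g x D = f x) = fun _ => False := by
      funext D
      apply propext
      refine ⟨?_, False.elim⟩
      rintro ⟨hA, hD⟩
      apply hf
      rw [Finset.mem_singleton]
      funext x
      rw [← hD x]
      by_contra hne
      have hv : Agr H v v := fun _ _ => rfl
      have h1 := hI x D v hA hv hne
      have h2 := key H v x D v hA hv hne
      rw [← Finset.card_pos] at h2
      omega
    rw [this]
    have h0 : Wt μ (fun _ => False) = 0 := by simp [Wt]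
    rw [h0]
    exact mul_nonneg (pow_nonneg (sub_nonneg.2 h7) _) (Wt_nonneg hμ _)
  | succ k ih =>
    intro H v hI
    let PW : Finset Y → Prop := fun S => ∃ x D0 D1, Agr H v D0 ∧ Agr H v D1 ∧ g x D0 ≠ g x D1 ∧
      S = (cert x D0 ∪ cert x D1) \ H
    let PT : Finset (Finset Y) → Prop := fun T => (∀ S ∈ T, PW S) ∧
      ∀ S ∈ T, ∀ S' ∈ T, S ≠ S' → Disjoint S S'
    obtain ⟨T, hT, hmax⟩ := Finset.exists_max_image
      (Finset.univ.filter PT) Finset.card ⟨∅, by simp [PT]⟩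
    have hT' : PT T := (Finset.mem_filter.1 hT).2
    obtain ⟨hTW, hTd⟩ := hT'
    by_cases hm : m ≤ T.card
    · refine ⟨∅, by simp, ?_⟩
      intro f _ μ hμ
      have hch : ∀ S : Finset Y, ∃ (R : Finset Y) (u : Y → Bool), S ∈ T →
          R ⊆ S ∧ Disjoint R H ∧ R.card ≤ q ∧
          ∀ D, Agr H v D → Agr R u D → ∃ x, g x D ≠ f x := by
        intro S
        by_cases hS : S ∈ T
        · obtain ⟨x, D0, D1, h0, h1, hne, hSe⟩ := hTW S hS
          have aux : ∀ D2, Agr H v D2 → g x D2 ≠ f x → ∀ D, Agr H v D →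
              Agr (cert x D2 \ H) D2 D → ∃ x, g x D ≠ f x := by
            intro D2 h2 hne2 D hD hR
            refine ⟨x, ?_⟩
            rw [hcert x D2 D]
            · exact hne2
            · intro y hy
              by_cases hyH : y ∈ H
              · rw [hD y hyH, h2 y hyH]
              · exact hR y (Finset.mem_sdiff.2 ⟨hy, hyH⟩)
          by_cases hf : g x D0 = f x
          · refine ⟨cert x D1 \ H, D1, fun _ => ⟨?_, Finset.sdiff_disjoint, ?_, ?_⟩⟩
            · rw [hSe]
              exact Finset.sdiff_subset_sdiff Finset.subset_union_right le_rfl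
            · exact (Finset.card_le_card Finset.sdiff_subset).trans (hcard _ _)
            · exact aux D1 h1 (fun h => hne (hf.trans h.symm))
          · refine ⟨cert x D0 \ H, D0, fun _ => ⟨?_, Finset.sdiff_disjoint, ?_, ?_⟩⟩
            · rw [hSe]
              exact Finset.sdiff_subset_sdiff Finset.subset_union_left le_rfl
            · exact (Finset.card_le_card Finset.sdiff_subset).trans (hcard _ _)
            · exact aux D0 h0 hf
        · exact ⟨∅, v, fun h => absurd h hS⟩
      choose R u hRu using hch
      have hB := caseB hμ q (Agr H v) T R u (by
          intro S hS y hy D b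
          unfold Agr
          refine forall₂_congr fun z hz => ?_
          have : z ≠ y := by
            rintro rfl
            exact Finset.disjoint_left.1 (hRu S hS).2.1 hy hz
          rw [Function.update_of_ne this]) (fun S hS => (hRu S hS).2.2.1)
        (fun S hS S' hS' hne => (hTd S hS S' hS' hne).mono (hRu S hS).1 (hRu S' hS').1)
      refine (Wt_mono hμ ?_).trans (hB.trans (mul_le_mul_of_nonneg_right ?_ (Wt_nonneg hμ _)))
      · rintro D ⟨hD, hDf⟩
        refine ⟨hD, fun S hS hA => ?_⟩
        obtain ⟨x, hx⟩ := (hRu S hS).2.2.2 D hD hA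
        exact hx (hDf x)
      · exact pow_le_pow_of_le_one (sub_nonneg.2 h7) (by linarith) hm
    · push Not at hm
      let U : Finset Y := T.biUnion id
      have hUH : Disjoint U H := by
        rw [Finset.disjoint_left]
        intro y hy hyH
        obtain ⟨S, hS, hyS⟩ := Finset.mem_biUnion.1 hy
        obtain ⟨x, D0, D1, h0, h1, hne, hSe⟩ := hTW S hS
        simp only [id, hSe] at hyS
        exact (Finset.mem_sdiff.1 hyS).2 hyH
      have hUc : U.card ≤ m * (k+1) := by
        refine (Finset.card_biUnion_le_card_mul T id (k+1) ?_).trans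
          (Nat.mul_le_mul_right _ hm.le)
        intro S hS
        obtain ⟨x, D0, D1, h0, h1, hne, hSe⟩ := hTW S hS
        simp only [id, hSe]
        exact hI x D0 D1 h0 h1 hne
      let ext : (U → Bool) → Y → Bool := fun w y => if h : y ∈ U then w ⟨y, h⟩ else v y
      have hextH : ∀ w D, Agr (H ∪ U) (ext w) D ↔ Agr H v D ∧ w = fun y => D y.1 := by
        intro w D
        constructor
        · intro h
          refine ⟨fun y hy => ?_, ?_⟩
          · have hyU : y ∉ U := fun h' => Finset.disjoint_left.1 hUH h' hy
            rw [h y (Finset.mem_union_left _ hy)]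
            simp [ext, hyU]
          · funext y
            have := h y.1 (Finset.mem_union_right _ y.2)
            rw [this]
            simp [ext]
        · rintro ⟨h1, rfl⟩ y hy
          by_cases hyU : y ∈ U
          · simp [ext, hyU]
          · simp only [ext, hyU, dite_false]
            rcases Finset.mem_union.1 hy with h | h
            · exact h1 y h
            · exact absurd h hyU
      have hInv : ∀ w, Inv g cert k (H ∪ U) (ext w) := by
        intro w x D0 D1 h0 h1 hne
        have a0 := ((hextH w D0).1 h0).1
        have a1 := ((hextH w D1).1 h1).1
        have hc := hI x D0 D1 a0 a1 hne
        have hn := key H v x D0 D1 a0 a1 hne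
        set S := (cert x D0 ∪ cert x D1) \ H with hS
        have hPS : PW S := ⟨x, D0, D1, a0, a1, hne, rfl⟩
        have hit : ∃ y ∈ S, y ∈ U := by
          by_contra hcon
          push Not at hcon
          have hST : S ∉ T := by
            intro hST
            obtain ⟨y, hy⟩ := hn
            exact hcon y hy (Finset.mem_biUnion.2 ⟨S, hST, hy⟩)
          have hdis : ∀ S' ∈ T, Disjoint S S' := by
            intro S' hS'
            rw [Finset.disjoint_left]
            intro y hy hy'
            exact hcon y hy (Finset.mem_biUnion.2 ⟨S', hS', hy'⟩)
          have := hmax (insert S T) (by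
            refine Finset.mem_filter.2 ⟨Finset.mem_univ _, ?_, ?_⟩
            · intro S' hS'
              rcases Finset.mem_insert.1 hS' with h | h
              · rw [h]; exact hPS
              · exact hTW S' h
            · intro S1 hS1 S2 hS2 hne'
              rcases Finset.mem_insert.1 hS1 with h | h <;>
              rcases Finset.mem_insert.1 hS2 with h' | h'
              · exact absurd (h.trans h'.symm) hne'
              · rw [h]; exact hdis S2 h'
              · rw [h']; exact (hdis S1 h).symm
              · exact hTd S1 h S2 h' hne')
          rw [Finset.card_insert_of_notMem hST] at this
          omega
        obtain ⟨y, hyS, hyU⟩ := hit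
        have hlt : ((cert x D0 ∪ cert x D1) \ (H ∪ U)).card < S.card := by
          apply Finset.card_lt_card
          rw [Finset.ssubset_iff_of_subset]
          · exact ⟨y, hyS, fun h => (Finset.mem_sdiff.1 h).2 (Finset.mem_union_right _ hyU)⟩
          · exact Finset.sdiff_subset_sdiff le_rfl Finset.subset_union_left
        omega
      choose F hF1 hF2 using fun w => ih (H ∪ U) (ext w) (hInv w)
      have hsum : ∀ (μ : (Y → Bool) → ℝ) (E : (Y → Bool) → Prop),
          Wt μ (fun D => Agr H v D ∧ E D) =
            ∑ w, Wt μ (fun D => Agr (H ∪ U) (ext w) D ∧ E D) := by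
        intro μ E
        unfold Wt
        rw [Finset.sum_comm]
        refine Finset.sum_congr rfl fun D _ => ?_
        rw [Finset.sum_eq_single (fun y : U => D y.1)]
        · simp only [hextH, and_true]
          congr
        · intro w _ hw
          simp only [hextH, hw, and_false, false_and, if_false]
        · simp
      refine ⟨Finset.univ.biUnion F, ?_, ?_⟩
      · refine (Finset.card_biUnion_le_card_mul _ F _ (fun w _ => hF1 w)).trans ?_
        rw [Finset.card_univ, Fintype.card_fun, Fintype.card_bool, Fintype.card_coe, ← pow_add]
        apply Nat.pow_le_pow_right (by norm_num)
        rw [Finset.sum_range_succ _ (k+1), mul_add]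
        omega
      · intro f hf μ hμ
        have hf' : ∀ w, f ∉ F w := fun w h =>
          hf (Finset.mem_biUnion.2 ⟨w, Finset.mem_univ _, h⟩)
        rw [hsum μ]
        have e : Wt μ (Agr H v) = ∑ w, Wt μ (Agr (H ∪ U) (ext w)) := by
          have := hsum μ (fun _ => True)
          simpa using this
        rw [e, Finset.mul_sum]
        exact Finset.sum_le_sum fun w _ => hF2 w f (hf' w) μ hμ

noncomputable def mu (c D : Y → Bool) : ℝ := ∏ y, if D y = c y then 2 else 1

lemma mu_good (c : Y → Bool) : Good (mu c) := by
  refine ⟨fun D => Finset.prod_nonneg fun y _ => by split_ifs <;> norm_num, ?_⟩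
  intro D y b
  unfold mu
  rw [← Finset.mul_prod_erase Finset.univ _ (Finset.mem_univ y),
    ← Finset.mul_prod_erase Finset.univ (fun z => if D z = c z then (2:ℝ) else 1)
      (Finset.mem_univ y), ← mul_assoc]
  have : ∏ z ∈ Finset.univ.erase y, (if Function.update D y b z = c z then (2:ℝ) else 1) =
      ∏ z ∈ Finset.univ.erase y, (if D z = c z then (2:ℝ) else 1) := by
    refine Finset.prod_congr rfl fun z hz => ?_
    rw [Function.update_of_ne (Finset.ne_of_mem_erase hz)]
  rw [this]
  refine mul_le_mul_of_nonneg_right ?_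
    (Finset.prod_nonneg fun y _ => by split_ifs <;> norm_num)
  split_ifs <;> norm_num

lemma prod_sum (c : Y → Bool) (t : ℝ) :
    ∑ D : Y → Bool, ∏ y, (if D y = c y then (2:ℝ) else t) = (2 + t) ^ Fintype.card Y := by
  have h := Finset.prod_univ_sum (fun _ : Y => (Finset.univ : Finset Bool))
    (fun y b => if b = c y then (2:ℝ) else t)
  rw [Fintype.piFinset_univ] at h
  rw [← h]
  have : ∀ y, ∑ b : Bool, (if b = c y then (2:ℝ) else t) = 2 + t := by
    intro y
    rw [Fintype.sum_bool]
    cases c y <;> simp [add_comm]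
  simp only [this, Finset.prod_const, Finset.card_univ]

lemma total (c : Y → Bool) : Wt (mu c) (fun _ => True) = 3 ^ Fintype.card Y := by
  have := prod_sum c 1
  simp only [Wt, mu, if_true]
  rw [this]; norm_num

lemma chernoff (c : Y → Bool) (hN : 200 ≤ Fintype.card Y) :
    Wt (mu c) (fun D => 2 * Fintype.card Y ≤ 5 * (Finset.univ.filter fun y => ¬ D y = c y).card)
      ≤ 3 ^ Fintype.card Y / 2 := by
  set N := Fintype.card Y with hNd
  set s : ℝ := 21/20 with hs
  have h1 : s ^ (2*N) * Wt (mu c) (fun D => 2 * N ≤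
      5 * (Finset.univ.filter fun y => ¬ D y = c y).card) ≤ (2 + s^5)^N := by
    rw [← prod_sum c (s^5)]
    unfold Wt
    rw [Finset.mul_sum]
    refine Finset.sum_le_sum fun D _ => ?_
    split_ifs with h
    · have e : ∏ y, (if D y = c y then (2:ℝ) else s^5) =
          s ^ (5 * (Finset.univ.filter fun y => ¬ D y = c y).card) * mu c D := by
        unfold mu
        rw [pow_mul, ← Finset.prod_const, Finset.prod_filter, ← Finset.prod_mul_distrib]
        refine Finset.prod_congr rfl fun y _ => ?_
        by_cases hy : D y = c y <;> simp [hy]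
      rw [e]
      exact mul_le_mul_of_nonneg_right (pow_le_pow_right₀ (by norm_num [hs]) h) ((mu_good c).1 D)
    · rw [mul_zero]
      exact Finset.prod_nonneg fun y _ => by split_ifs <;> positivity
  have h2 : 2 * (2 + s^5)^N ≤ s^(2*N) * 3^N := by
    have b : (1 + 1/200 : ℝ)^N ≥ 1 + N * (1/200) :=
      one_add_mul_le_pow (by norm_num) N
    have hN' : (200:ℝ) ≤ N := by exact_mod_cast hN
    have b2 : (2:ℝ) ≤ (1 + 1/200 : ℝ)^N := by linarith
    calc 2 * (2 + s^5)^N ≤ (1 + 1/200 : ℝ)^N * (2 + s^5)^N :=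
          mul_le_mul_of_nonneg_right b2 (by positivity)
      _ = ((1 + 1/200 : ℝ) * (2 + s^5))^N := (mul_pow _ _ _).symm
      _ ≤ (s^2 * 3)^N := by
          apply pow_le_pow_left₀ (by positivity)
          norm_num [hs]
      _ = s^(2*N) * 3^N := by rw [mul_pow, pow_mul]
  have hp : 0 < s^(2*N) := by positivity
  rw [← mul_le_mul_iff_right₀ hp]
  linarith

end

lemma ans_congr {q : ℕ} {I Q : Type} (P : OracleProc q I Q) (D D' : Q → Bool) (w : I)
    (h : ∀ i : Fin q, D' (P.qry i w (fun j => P.ans D w ⟨j.val, j.isLt.trans i.isLt⟩)) =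
      D (P.qry i w (fun j => P.ans D w ⟨j.val, j.isLt.trans i.isLt⟩))) :
    ∀ n (hn : n < q), P.ans D' w ⟨n, hn⟩ = P.ans D w ⟨n, hn⟩ := by
  intro n
  induction n using Nat.strong_induction_on with
  | _ n ih =>
    intro hn
    rw [OracleProc.ans, OracleProc.ans]
    rw [← h ⟨n, hn⟩]
    congr 2
    funext j
    exact ih j.1 j.2 _

lemma arith (q : ℕ) : 3^q * (q * (2*q-1)) + 1 ≤ 8^q := by
  rcases Nat.lt_or_ge q 2 with h | h
  · interval_cases q <;> norm_num
  · induction q, h using Nat.le_induction with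
    | base => norm_num
    | succ q hq ih =>
      have e : 2 * (q+1) - 1 = 2 * q + 1 := by omega
      obtain ⟨r, hr⟩ : ∃ r, q = r + 1 := ⟨q-1, by omega⟩
      have h1 : 3 * ((q+1) * (2*q+1)) ≤ 8 * (q * (2*q-1)) := by
        subst hr
        have : 2*(r+1)-1 = 2*r+1 := by omega
        rw [this]
        nlinarith
      rw [e, pow_succ, pow_succ]
      have h2 := Nat.mul_le_mul_left (3^q) h1
      nlinarith

/-- Combinatorial core. -/
lemma core {X Y Al : Type} [Fintype X] [Fintype Y] [Fintype Al] (a A q : ℕ)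
    (hAl : Fintype.card Al = 2 ^ a) (hA : a + 1 ≤ A) (hL : 8 ^ q * A < Fintype.card X)
    (hN : 200 ≤ Fintype.card Y)
    (Con : (X → Bool) → Y → Bool) (Red : OracleProc q (X × Al) Y)
    (h : ∀ f D, 5 * (Finset.univ.filter fun y => ¬ D y = Con f y).card < 2 * Fintype.card Y →
      ∃ α, ∀ x, Red.run D (x, α) = f x) : False := by
  let g : Al → X → (Y → Bool) → Bool := fun α x D => Red.run D (x, α)
  let cert : Al → X → (Y → Bool) → Finset Y := fun α x D =>
    Finset.univ.image fun i : Fin q =>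
      Red.qry i (x, α) (fun j => Red.ans D (x, α) ⟨j.val, j.isLt.trans i.isLt⟩)
  have hcard : ∀ α x D, (cert α x D).card ≤ q := fun α x D =>
    Finset.card_image_le.trans (by simp)
  have hcert : ∀ α x D D', Agr (cert α x D) D D' → g α x D' = g α x D := by
    intro α x D D' hA
    have := ans_congr Red D D' (x, α) (fun i => hA _
      (Finset.mem_image_of_mem _ (Finset.mem_univ i)))
    simp only [g, OracleProc.run]
    congr 1
    funext i
    exact this i.1 i.2
  have hInv : ∀ α, Inv (g α) (cert α) (2*q-1) ∅ (fun _ => false) := by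
    intro α x D0 D1 _ _ hne
    rw [Finset.sdiff_empty]
    have hi : (cert α x D0 ∩ cert α x D1).Nonempty := by
      by_contra hc
      rw [Finset.not_nonempty_iff_eq_empty, ← Finset.disjoint_iff_inter_eq_empty] at hc
      let D : Y → Bool := fun y => if y ∈ cert α x D0 then D0 y else D1 y
      apply hne
      rw [← hcert α x D0 D, ← hcert α x D1 D]
      · intro y hy
        have : y ∉ cert α x D0 := fun h' => Finset.disjoint_left.1 hc h' hy
        simp [D, this]
      · intro y hy
        simp [D, hy]
    have := Finset.card_union_add_card_inter (cert α x D0) (cert α x D1)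
    have h0 := hcard α x D0
    have h1 := hcard α x D1
    rw [← Finset.card_pos] at hi
    omega
  set m := A * 3^q with hm
  choose F hF1 hF2 using fun α => step (g α) (cert α) q m (hcard α) (hcert α) (2*q-1) _ _ (hInv α)
  have hS : ∑ i ∈ Finset.range (2*q-1+1), i = q * (2*q-1) := by
    have := Finset.sum_range_id_mul_two (2*q-1+1)
    rw [Nat.add_sub_cancel] at this
    rcases Nat.eq_zero_or_pos q with h0 | h0
    · subst h0; simp
    · have e : 2*q-1+1 = 2*q := by omega
      rw [e] at this ⊢
      nlinarith
  obtain ⟨f, hf⟩ : ∃ f : X → Bool, ∀ α, f ∉ F α := by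
    by_contra hcon
    push Not at hcon
    have h1 : (Finset.univ : Finset (X → Bool)) ⊆ Finset.univ.biUnion F := by
      intro f _
      obtain ⟨α, hα⟩ := hcon f
      exact Finset.mem_biUnion.2 ⟨α, Finset.mem_univ _, hα⟩
    have h2 := (Finset.card_le_card h1).trans
      (Finset.card_biUnion_le_card_mul _ F _ (fun w _ => hF1 w))
    rw [Finset.card_univ, Finset.card_univ, Fintype.card_fun, Fintype.card_bool, hAl, hS,
      ← pow_add, Nat.pow_le_pow_iff_right (by norm_num)] at h2
    have h3 := Nat.mul_le_mul_left A (arith q)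
    have : m * (q * (2*q-1)) = A * (3^q * (q * (2*q-1))) := by rw [hm, mul_assoc]
    rw [mul_add, ← this] at h3
    nlinarith
  have hμ := mu_good (Con f)
  set μ := mu (Con f) with hμd
  have hT := total (Con f)
  have hC := chernoff (Con f) hN
  rw [← hμd] at hT hC
  set N := Fintype.card Y with hNN
  have hAgr : Agr (∅ : Finset Y) (fun _ => false) = fun _ => True := by
    funext D
    simp [Agr]
  have hb : ∀ α, Wt μ (fun D => ∀ x, g α x D = f x) ≤ (1 - (1/3:ℝ)^q)^m * 3^N := by
    intro α
    have := hF2 α f (hf α) μ hμ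
    rw [hAgr, hT] at this
    simpa using this
  have hsplit := Wt_split μ (fun _ => True) (fun D => 2 * N ≤
      5 * (Finset.univ.filter fun y => ¬ D y = Con f y).card)
  simp only [true_and] at hsplit
  rw [hT] at hsplit
  have hU : Wt μ (fun D => ¬ 2 * N ≤
      5 * (Finset.univ.filter fun y => ¬ D y = Con f y).card) ≤
      ∑ α, Wt μ (fun D => ∀ x, g α x D = f x) :=
    Wt_union hμ _ (fun α D => ∀ x, g α x D = f x) (fun D hD => h f D (not_le.1 hD))
  have hU2 : ∑ α, Wt μ (fun D => ∀ x, g α x D = f x) ≤ 2^a * ((1 - (1/3:ℝ)^q)^m * 3^N) := by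
    refine (Finset.sum_le_sum fun α _ => hb α).trans ?_
    rw [Finset.sum_const, Finset.card_univ, hAl, nsmul_eq_mul]
    push_cast
    exact le_rfl
  have hfin : (2:ℝ)^a * (1 - (1/3:ℝ)^q)^m < 1/2 := by
    have h7 : (1/3:ℝ)^q ≤ 1 := pow_le_one₀ (by norm_num) (by norm_num)
    have h1 : (1 - (1/3:ℝ)^q)^(3^q) ≤ Real.exp (-1) := by
      have := pow_le_pow_left₀ (sub_nonneg.2 h7) (Real.one_sub_le_exp_neg ((1/3:ℝ)^q)) (3^q)
      refine this.trans (le_of_eq ?_)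
      rw [← Real.exp_nat_mul]
      congr 1
      push_cast
      rw [mul_neg, ← mul_pow]
      norm_num
    have h2 : Real.exp (-1) < 1/2 := by
      have := Real.exp_neg_one_lt_d9
      linarith
    have h3 : (1 - (1/3:ℝ)^q)^m ≤ Real.exp (-1) ^ A := by
      rw [hm, mul_comm A, pow_mul]
      exact pow_le_pow_left₀ (pow_nonneg (sub_nonneg.2 h7) _) h1 A
    have h4 : Real.exp (-1) ^ A < (1/2:ℝ)^A :=
      pow_lt_pow_left₀ h2 (Real.exp_pos _).le (by omega)
    have h5 : (1/2:ℝ)^A ≤ (1/2)^(a+1) := pow_le_pow_of_le_one (by norm_num) (by norm_num) hA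
    have h6 : (2:ℝ)^a * (1/2)^(a+1) = 1/2 := by
      rw [pow_succ, ← mul_assoc, ← mul_pow]
      norm_num
    have h8 : (1 - (1/3:ℝ)^q)^m < (1/2)^(a+1) := by linarith
    rw [← h6]
    exact mul_lt_mul_of_pos_left h8 (by positivity)
  have h3N : (0:ℝ) < 3^N := by positivity
  have := mul_lt_mul_of_pos_right hfin h3N
  nlinarith

end HAQ

/-- Theorem 4.2: lower bound of `(ℓ - log(2a))/3` on the number of queries in black-box
hardness amplification. -/
theorem hardness_amplification_query_lower_bound_ell :
    ∃ c₃ : ℝ, c₃ > 0 ∧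
      ∀ (ℓ ℓ' a q : ℕ) (ε : ℝ)
        (Con : ((Fin ℓ → Bool) → Bool) → (Fin ℓ' → Bool) → Bool)
        (Red : OracleProc q ((Fin ℓ → Bool) × (Fin a → Bool)) (Fin ℓ' → Bool)),
        -- (Con, Red) is a black-box HF ⇒ (1/2+ε)-HF proof:
        (∀ (f : (Fin ℓ → Bool) → Bool) (D : (Fin ℓ' → Bool) → Bool),
            uPr (fun x : Fin ℓ' → Bool => D x = Con f x) ≥ 1 / 2 + ε →
            ∃ α : Fin a → Bool, ∀ x : Fin ℓ → Bool, OracleProc.run Red D (x, α) = f x) →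
        0 < ε → ε ≤ 1 / 10 →
        (ℓ' : ℝ) ≥ Real.logb 2 (1 / ε ^ 2) + c₃ →
        (q : ℝ) ≥ ((ℓ : ℝ) - Real.logb 2 (2 * a)) / 3 := by
  refine ⟨1, one_pos, ?_⟩
  intro ℓ ℓ' a q ε Con Red h hε hε' hℓ'
  by_contra hq
  push Not at hq
  let A : ℕ := if a = 0 then 1 else 2 * a
  have hA : a + 1 ≤ A := by
    simp only [A]
    split_ifs <;> omega
  have hlog : Real.logb 2 (A : ℝ) = Real.logb 2 (2 * a) := by
    by_cases h0 : a = 0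
    · simp [A, h0]
    · simp [A, h0]
  have hApos : (0:ℝ) < A := by
    have : 0 < A := by omega
    exact_mod_cast this
  have hL : 8 ^ q * A < 2 ^ ℓ := by
    rw [← hlog] at hq
    have h1 : Real.logb 2 (A:ℝ) < (ℓ:ℝ) - 3 * q := by linarith
    rw [Real.logb_lt_iff_lt_rpow (by norm_num) hApos, Real.rpow_sub (by norm_num),
      lt_div_iff₀ (by positivity), Real.rpow_natCast,
      show (3:ℝ) * q = ((3 * q : ℕ) : ℝ) by push_cast; ring, Real.rpow_natCast, pow_mul] at h1
    have h2 : ((A * (2^3)^q : ℕ) : ℝ) < ((2^ℓ : ℕ) : ℝ) := by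
      push_cast
      norm_num at h1 ⊢
      exact h1
    have h3 : A * (2^3)^q < 2^ℓ := by exact_mod_cast h2
    rw [mul_comm]
    exact h3
  have hN : 200 ≤ 2 ^ ℓ' := by
    have e1 : (100:ℝ) ≤ 1 / ε^2 := by
      rw [le_div_iff₀ (by positivity)]
      nlinarith
    have h1 : Real.logb 2 (1/ε^2) ≤ (ℓ':ℝ) - 1 := by linarith
    rw [Real.logb_le_iff_le_rpow (by norm_num) (by positivity), Real.rpow_sub (by norm_num),
      le_div_iff₀ (by positivity), Real.rpow_natCast, Real.rpow_one] at h1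
    have : (200:ℝ) ≤ 2^ℓ' := by linarith
    exact_mod_cast this
  refine HAQ.core (X := Fin ℓ → Bool) (Y := Fin ℓ' → Bool) (Al := Fin a → Bool) a A q
    (by simp) hA (by simpa using hL) (by simpa using hN) Con Red ?_
  intro f D hD
  apply h
  have hsum : Fintype.card {x : Fin ℓ' → Bool // D x = Con f x} +
      (Finset.univ.filter fun y => ¬ D y = Con f y).card = Fintype.card (Fin ℓ' → Bool) := by
    rw [Fintype.card_subtype, ← Finset.card_univ]
    exact Finset.card_filter_add_card_filter_not _
  unfold uPr
  have hc : (0:ℝ) < (Fintype.card (Fin ℓ' → Bool) : ℝ) := by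
    exact_mod_cast Fintype.card_pos
  rw [ge_iff_le, le_div_iff₀ hc]
  have h1 : (3 * Fintype.card (Fin ℓ' → Bool) : ℝ) ≤
      5 * Fintype.card {x : Fin ℓ' → Bool // D x = Con f x} := by
    have : 3 * Fintype.card (Fin ℓ' → Bool) ≤
      5 * Fintype.card {x : Fin ℓ' → Bool // D x = Con f x} := by omega
    exact_mod_cast this
  have h3 : (1 / 2 + ε) * (Fintype.card (Fin ℓ' → Bool) : ℝ) ≤
      (Fintype.card {x : Fin ℓ' → Bool // D x = Con f x} : ℝ) := by
    have := mul_le_mul_of_nonneg_right hε' hc.le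
    linarith
  refine h3.trans (le_of_eq ?_)
  congr!
end

section
/- There exist constants c > 0 and ℓ₀ such that the following holds for all ℓ ≥ ℓ₀ and all parameters r, m, a, j with m ≥ 2r, m ≤ 2^ℓ, j > 4, and a + j·ℓ ≤ min(j·(m − r) − c, 2^ℓ/2). When E : {0,1}^{2^ℓ} × {0,1}^r → {0,1}^m is chosen uniformly at random among all such functions, the probability that there exist j distinct strings z_1,…,z_j ∈ {0,1}^m with Pr_{F uniform in Func_{ℓ,1}}[for every i ∈ {1,…,j} there exists y ∈ {0,1}^r with Con^E_F(y) = z_i] ≥ 2^{−(a + j·ℓ)} is smaller than 2^{−2^{2^ℓ/2}}. -/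
open scoped BigOperators

attribute [local instance] Classical.propDecidable

def hitsAll {Y Z : Type*} {j : ℕ} (z : Fin j → Z) (e : Y → Z) : Prop := ∀ i, ∃ y, e y = z i

theorem aux_count {Y Z : Type*} [Fintype Y] [Fintype Z] [Fintype (Y → Z)] (j : ℕ) (z : Fin j → Z)
    (hz : Function.Injective z) :
    Fintype.card {e : Y → Z // hitsAll z e} * Fintype.card Z ^ j ≤
      Fintype.card Y ^ j * Fintype.card (Y → Z) := by
  have h : Fintype.card ({e : Y → Z // hitsAll z e} × (Fin j → Z)) ≤
      Fintype.card ((Fin j → Y) × (Y → Z)) := by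
    have key : ∀ e : {e : Y → Z // hitsAll z e}, ∃ y : Fin j → Y, ∀ i, e.1 (y i) = z i :=
      fun e => ⟨fun i => (e.2 i).choose, fun i => (e.2 i).choose_spec⟩
    choose y hy using key
    have hyi : ∀ e, Function.Injective (y e) := by
      intro e a b hab
      apply hz
      rw [← hy e a, ← hy e b, hab]
    apply Fintype.card_le_of_injective
      (fun p => (y p.1, Function.extend (y p.1) p.2 p.1.1))
    have hrec : ∀ (e : {e : Y → Z // hitsAll z e}) (w : Fin j → Z),
        Function.extend (y e) z (Function.extend (y e) w e.1) = e.1 := by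
      intro e w
      funext v
      by_cases hv : ∃ i, y e i = v
      · obtain ⟨i, rfl⟩ := hv
        rw [(hyi e).extend_apply, hy]
      · rw [Function.extend_apply' _ _ _ hv, Function.extend_apply' _ _ _ hv]
    rintro ⟨e, w⟩ ⟨e', w'⟩ h
    simp only [Prod.mk.injEq] at h
    obtain ⟨h1, h2⟩ := h
    have he : e = e' := by
      apply Subtype.ext
      rw [← hrec e w, ← hrec e' w', h2, h1]
    subst he
    congr 1
    funext i
    have := congrFun h2 (y e i)
    rwa [(hyi e).extend_apply, (hyi e).extend_apply] at this
  simpa [Fintype.card_prod] using h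

theorem aux_moment {X W : Type*} [Fintype X] [Fintype W] [Nonempty W] [inst : Fintype (X → W)] (G : W → Prop)
    (p t k : ℝ) (ht : 1 ≤ t)
    (hp : (Fintype.card {w // G w} : ℝ) ≤ p * Fintype.card W) :
    uPr (fun E : X → W => k ≤ (Fintype.card {x // G (E x)} : ℝ)) ≤
      t ^ (-k) * Real.exp (Fintype.card X * (p * (t - 1))) := by
  have hinst : inst = Pi.instFintype := Subsingleton.elim _ _
  subst hinst
  have ht0 : 0 < t := by linarith
  have hW : (0 : ℝ) < Fintype.card W := by exact_mod_cast Fintype.card_pos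
  have hXW : (0 : ℝ) < Fintype.card (X → W) := by exact_mod_cast Fintype.card_pos
  have hsum : ∑ E : X → W, ∏ x, (if G (E x) then t else 1) =
      (∑ w : W, if G w then t else 1) ^ Fintype.card X := by
    rw [← Finset.card_univ, ← Finset.prod_const, Finset.prod_univ_sum]
    simp
  have hw : (∑ w : W, if G w then t else 1) ≤ Fintype.card W * Real.exp (p * (t - 1)) := by
    have h1 : (∑ w : W, if G w then t else (1:ℝ)) =
        Fintype.card W + (Fintype.card {w // G w} : ℝ) * (t - 1) := by
      have : ∀ w : W, (if G w then t else (1:ℝ)) = 1 + (if G w then (t - 1) else 0) := by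
        intro w; split_ifs <;> ring
      simp_rw [this, Finset.sum_add_distrib, ← Finset.sum_filter]
      simp [Fintype.card_subtype]
      ring
    rw [h1]
    have h2 := Real.add_one_le_exp (p * (t - 1))
    nlinarith [mul_le_mul_of_nonneg_right hp (sub_nonneg.2 ht), mul_le_mul_of_nonneg_left h2 hW.le]
  have hpow : ∀ E : X → W, ∏ x, (if G (E x) then t else 1) =
      t ^ (Fintype.card {x // G (E x)} : ℝ) := by
    intro E
    rw [Real.rpow_natCast, Finset.prod_ite, Fintype.card_subtype]
    simp
  have hmk : (Fintype.card {E : X → W // k ≤ (Fintype.card {x // G (E x)} : ℝ)} : ℝ) * t ^ k ≤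
      ∑ E : X → W, ∏ x, (if G (E x) then t else 1) := by
    rw [Fintype.card_subtype, ← nsmul_eq_mul, ← Finset.sum_const]
    refine le_trans (Finset.sum_le_sum (g := fun E : X → W => ∏ x, (if G (E x) then t else 1)) ?_)
      (Finset.sum_le_sum_of_subset_of_nonneg (Finset.subset_univ _) ?_)
    · intro E hE
      rw [hpow]
      exact Real.rpow_le_rpow_of_exponent_le ht (Finset.mem_filter.1 hE).2
    · intro E _ _
      rw [hpow]; positivity
  unfold uPr
  rw [div_le_iff₀ hXW, Real.rpow_neg ht0.le, mul_assoc, ← div_eq_inv_mul,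
    le_div_iff₀ (by positivity)]
  refine hmk.trans ?_
  rw [hsum]
  have h0 : 0 ≤ ∑ w : W, if G w then t else (1:ℝ) :=
    Finset.sum_nonneg fun w _ => by split_ifs <;> linarith
  refine (pow_le_pow_left₀ h0 hw _).trans (le_of_eq ?_)
  rw [mul_pow, ← Real.exp_nat_mul, Fintype.card_fun]
  push_cast
  ring

theorem aux_union {X I : Type*} [Fintype X] [Fintype I] [Nonempty X] (P : I → X → Prop)
    (Q : X → Prop) (B : ℝ) (hQ : ∀ x, Q x → ∃ i, P i x) (hB : ∀ i, uPr (P i) ≤ B ∨ ∀ x, ¬ P i x)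
    (hB0 : 0 ≤ B) :
    uPr Q ≤ Fintype.card I * B := by
  have hX : (0 : ℝ) < Fintype.card X := by exact_mod_cast Fintype.card_pos
  have hB' : ∀ i, uPr (P i) ≤ B := by
    intro i
    rcases hB i with h | h
    · exact h
    · unfold uPr
      have : Fintype.card {x // P i x} = 0 := by
        rw [Fintype.card_eq_zero_iff]; exact ⟨fun x => h _ x.2⟩
      rw [this]; simpa using hB0
  have h1 : Fintype.card {x // Q x} ≤ ∑ i, Fintype.card {x // P i x} := by
    simp_rw [Fintype.card_subtype]
    refine le_trans (Finset.card_le_card ?_) Finset.card_biUnion_le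
    intro x hx
    simpa using hQ x (Finset.mem_filter.1 hx).2
  calc uPr Q ≤ ∑ i, uPr (P i) := by
        unfold uPr
        rw [← Finset.sum_div]
        gcongr
        exact_mod_cast h1
    _ ≤ ∑ _i : I, B := Finset.sum_le_sum fun i _ => hB' i
    _ = _ := by simp

/-- Theorem 3.5 (first item): for a uniformly random construction map `E`, it is extremely
unlikely that `j` outputs can be fixed at information cost `a + j·ℓ`. -/
theorem random_construction_has_no_cheap_fixing :
    ∃ (c : ℝ) (ℓ₀ : ℕ), c > 0 ∧
      ∀ (ℓ r m a j : ℕ), ℓ ≥ ℓ₀ → m ≥ 2 * r → m ≤ 2 ^ ℓ → j > 4 →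
        (a : ℝ) + (j : ℝ) * (ℓ : ℝ) ≤
            min ((j : ℝ) * ((m : ℝ) - (r : ℝ)) - c) (2 ^ ℓ / 2) →
        uPr (fun E : ((Fin ℓ → Bool) → Bool) → (Fin r → Bool) → (Fin m → Bool) =>
            ∃ z : Fin j → (Fin m → Bool), Function.Injective z ∧
              uPr (fun F : (Fin ℓ → Bool) → Bool =>
                  ∀ i : Fin j, ∃ y : Fin r → Bool, E F y = z i) ≥
                (2 : ℝ) ^ (-((a : ℝ) + (j : ℝ) * (ℓ : ℝ)))) <
          (2 : ℝ) ^ (-(2 : ℝ) ^ ((2 : ℝ) ^ (ℓ : ℕ) / 2)) := by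
  refine ⟨10, 5, by norm_num, ?_⟩
  intro ℓ r m a j hℓ _ hm hj hs
  set s : ℝ := (a : ℝ) + (j : ℝ) * (ℓ : ℝ) with hsdef
  obtain ⟨hs1, hs2⟩ := le_min_iff.1 hs
  set N : ℝ := (2:ℝ) ^ ((2:ℝ) ^ ℓ) with hN
  have hcard : (Fintype.card ((Fin ℓ → Bool) → Bool) : ℝ) = N := by
    simp only [Fintype.card_fun, Fintype.card_bool, Fintype.card_fin]
    rw [hN]
    push_cast
    rw [← Real.rpow_natCast]
    push_cast
    rfl
  set k : ℝ := N * 2 ^ (-s) with hk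
  set T : ℝ := (2 : ℝ) ^ ((2 : ℝ) ^ (ℓ : ℕ) / 2) with hT
  set p : ℝ := (2:ℝ) ^ (-((j : ℝ) * ((m : ℝ) - (r : ℝ)))) with hp
  have hNpos : 0 < N := by positivity
  have hTpos : 0 < T := by positivity
  have hkT : T ≤ k := by
    rw [hk, hN, hT, ← Real.rpow_add two_pos]
    apply Real.rpow_le_rpow_of_exponent_le one_le_two
    linarith
  have hpk : N * (p * 1024) ≤ k := by
    rw [hk]
    apply mul_le_mul_of_nonneg_left _ hNpos.le
    have : (1024:ℝ) = 2 ^ (10:ℝ) := by norm_num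
    rw [hp, this, ← Real.rpow_add two_pos]
    apply Real.rpow_le_rpow_of_exponent_le one_le_two
    linarith
  have hppos : 0 < p := by positivity
  have hbound := aux_union
    (X := ((Fin ℓ → Bool) → Bool) → (Fin r → Bool) → (Fin m → Bool))
    (I := Fin j → (Fin m → Bool))
    (fun z E => Function.Injective z ∧ k ≤
      (Fintype.card {F : (Fin ℓ → Bool) → Bool // hitsAll z (E F)} : ℝ))
    (fun E => ∃ z : Fin j → (Fin m → Bool), Function.Injective z ∧
              uPr (fun F : (Fin ℓ → Bool) → Bool =>
                  ∀ i : Fin j, ∃ y : Fin r → Bool, E F y = z i) ≥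
                (2 : ℝ) ^ (-s))
    ((1024:ℝ) ^ (-k) * Real.exp (N * (p * (1024 - 1)))) ?_ ?_ (by positivity)
  · refine hbound.trans_lt ?_
    have hmj : (m : ℝ) * j ≤ T := by
      have h1 : (m : ℝ) ≤ 2 ^ ℓ := by exact_mod_cast hm
      have hl5 : (5:ℝ) ≤ ℓ := by exact_mod_cast hℓ
      have h2 : (j : ℝ) ≤ 2 ^ ℓ := by
        have : (0:ℝ) ≤ a := by positivity
        have : (0:ℝ) ≤ j := by positivity
        have : (0:ℝ) < 2 ^ ℓ := by positivity
        nlinarith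
      have h3 : (m : ℝ) * j ≤ 2 ^ ℓ * 2 ^ ℓ := by gcongr
      refine h3.trans ?_
      rw [← pow_add, ← Real.rpow_natCast, hT]
      apply Real.rpow_le_rpow_of_exponent_le one_le_two
      have h4 : 4 * ℓ ≤ 2 ^ ℓ := by
        clear * - hℓ
        induction ℓ, hℓ using Nat.le_induction with
        | base => norm_num
        | succ n hn ih => rw [pow_succ]; omega
      have h5 : (4:ℝ) * ℓ ≤ 2 ^ ℓ := by exact_mod_cast h4
      push_cast
      linarith
    have hI : (Fintype.card (Fin j → (Fin m → Bool)) : ℝ) = Real.exp (Real.log 2 * (m * j)) := by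
      rw [← Real.rpow_def_of_pos two_pos]
      simp only [Fintype.card_fun, Fintype.card_bool, Fintype.card_fin]
      rw [← pow_mul]
      push_cast
      rw [← Real.rpow_natCast]
      push_cast
      rfl
    have h1024 : Real.log 1024 = 10 * Real.log 2 := by
      rw [show (1024:ℝ) = 2 ^ 10 by norm_num, Real.log_pow]; norm_num
    rw [hI, Real.rpow_def_of_pos (by norm_num : (0:ℝ) < 1024), Real.rpow_def_of_pos two_pos,
      ← Real.exp_add, ← Real.exp_add, h1024]
    apply Real.exp_lt_exp.2
    have hl := Real.log_two_gt_d9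
    have hNp : 0 < N * p := by positivity
    have e1 : N * (p * (1024 - 1)) ≤ k := by linarith
    have e2 : k ≤ Real.log 2 * (2 * k) := by nlinarith
    have e3 : Real.log 2 * (m * j + 2 * k - 10 * k + T) < 0 := by
      apply mul_neg_of_pos_of_neg <;> linarith
    linarith
  · rintro E ⟨z, hz, h⟩
    refine ⟨z, hz, ?_⟩
    change uPr (fun F : (Fin ℓ → Bool) → Bool => hitsAll z (E F)) ≥ _ at h
    unfold uPr at h
    rw [hcard, ge_iff_le, le_div_iff₀ hNpos] at h
    rw [hk, mul_comm]
    exact h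
  · intro z
    by_cases hz : Function.Injective z
    · left
      have := aux_moment (X := (Fin ℓ → Bool) → Bool) (W := (Fin r → Bool) → (Fin m → Bool))
        (hitsAll z) p 1024 k (by norm_num) ?_
      · rw [hcard] at this
        simpa only [hz, true_and] using this
      · have hc := aux_count (Y := Fin r → Bool) j z hz
        have hc' : (Fintype.card {e : (Fin r → Bool) → (Fin m → Bool) // hitsAll z e} : ℝ)
            * ((2:ℝ) ^ m) ^ j ≤ ((2:ℝ) ^ r) ^ j *
              Fintype.card ((Fin r → Bool) → (Fin m → Bool)) := by
          have hm2 : Fintype.card (Fin m → Bool) = 2 ^ m := by simp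
          have hr2 : Fintype.card (Fin r → Bool) = 2 ^ r := by simp
          rw [hm2, hr2] at hc
          exact_mod_cast hc
        have hpe : p * ((2:ℝ) ^ m) ^ j = ((2:ℝ) ^ r) ^ j := by
          rw [hp, ← pow_mul, ← pow_mul, ← Real.rpow_natCast, ← Real.rpow_natCast,
            ← Real.rpow_add two_pos]
          congr 1
          push_cast
          ring
        rw [← hpe] at hc'
        have hpos : (0:ℝ) < ((2:ℝ) ^ m) ^ j := by positivity
        refine le_of_mul_le_mul_right (hc'.trans (le_of_eq ?_)) hpos
        ring
    · right
      intro E h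
      exact hz h.1
end

section
/- Let (Con, Red) be a black-box HF⇒(1/2+ε)-HF proof with parameters (ℓ, ℓ', a) whose reduction makes q queries, and let n = 2^{ℓ'}. Then for every α ∈ {0,1}^a there exists a q-CNF C^α over n variables with at most 2^{q+ℓ} clauses such that the function C = ⋁_{α ∈ {0,1}^a} C^α satisfies: (1) Pr[C(U_n) = 1] ≤ 2^{−(2^ℓ − a)}; and (2) C(x) = 1 for every x ∈ {0,1}^n with wt(x) ≤ (1/2 − ε)·n. -/
open scoped BigOperators

attribute [local instance] Classical.propDecidable

theorem rd3_uPr {X : Type*} [Fintype X] (P : X → Prop) [inst : Fintype {x // P x}] :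
    uPr P = (Fintype.card {x : X // P x} : ℝ) / (Fintype.card X : ℝ) := by
  unfold uPr
  congr!

theorem rd3_ans_iff {q : ℕ} {I Q : Type*} (P : OracleProc q I Q) (D : Q → Bool) (w : I)
    (b : Fin q → Bool) :
    P.ans D w = b ↔
      ∀ i : Fin q, D (P.qry i w (fun j => b ⟨j.val, j.isLt.trans i.isLt⟩)) = b i := by
  constructor
  · rintro rfl i
    conv_rhs => rw [OracleProc.ans]
  · intro h
    have key : ∀ m : ℕ, ∀ hm : m < q, P.ans D w ⟨m, hm⟩ = b ⟨m, hm⟩ := by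
      intro m
      induction m using Nat.strong_induction_on with
      | _ m ih =>
        intro hm
        rw [OracleProc.ans, ← h ⟨m, hm⟩]
        congr 2
        funext j
        exact ih j.val j.isLt _
    funext i
    exact key i.val i.isLt

/-- the clause forbidding the transcript `b` on input `w` -/
def rd3Clause {q n : ℕ} {I Q : Type*} (P : OracleProc q I Q) (e : Q ≃ Fin n) (g : Q → Bool)
    (w : I) (b : Fin q → Bool) : BClause n :=
  List.ofFn (fun i : Fin q =>
    let y := P.qry i w (fun j => b ⟨j.val, j.isLt.trans i.isLt⟩)
    (e y, !(xor (g y) (b i))))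

theorem rd3Clause_eval {q n : ℕ} {I Q : Type*} (P : OracleProc q I Q) (e : Q ≃ Fin n)
    (g : Q → Bool) (w : I) (b : Fin q → Bool) (z : Fin n → Bool) :
    BClause.eval (rd3Clause P e g w b) z = true ↔
      P.ans (fun y => xor (g y) (z (e y))) w ≠ b := by
  rw [Ne, rd3_ans_iff, not_forall]
  simp only [BClause.eval, rd3Clause, List.any_eq_true, List.mem_ofFn]
  constructor
  · rintro ⟨_, ⟨i, rfl⟩, h⟩
    refine ⟨i, ?_⟩
    revert h
    dsimp only
    generalize z _ = u
    generalize g _ = v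
    generalize b i = t
    revert u v t
    decide
  · rintro ⟨i, h⟩
    refine ⟨_, ⟨i, rfl⟩, ?_⟩
    revert h
    dsimp only
    generalize z _ = u
    generalize g _ = v
    generalize b i = t
    revert u v t
    decide

/-- the CNF for a fixed advice string -/
noncomputable def rd3CNF {ℓ a q n : ℕ} {Q : Type*}
    (P : OracleProc q ((Fin ℓ → Bool) × (Fin a → Bool)) Q) (e : Q ≃ Fin n) (g : Q → Bool)
    (f : (Fin ℓ → Bool) → Bool) (α : Fin a → Bool) : BCNF n :=
  ((Finset.univ.filter (fun p : (Fin q → Bool) × (Fin ℓ → Bool) =>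
    P.out (p.2, α) p.1 ≠ f p.2)).toList).map (fun p => rd3Clause P e g (p.2, α) p.1)

theorem rd3CNF_eval {ℓ a q n : ℕ} {Q : Type*}
    (P : OracleProc q ((Fin ℓ → Bool) × (Fin a → Bool)) Q) (e : Q ≃ Fin n) (g : Q → Bool)
    (f : (Fin ℓ → Bool) → Bool) (α : Fin a → Bool) (z : Fin n → Bool) :
    BCNF.eval (rd3CNF P e g f α) z = true ↔
      ∀ x, P.run (fun y => xor (g y) (z (e y))) (x, α) = f x := by
  simp only [BCNF.eval, rd3CNF, List.all_eq_true, List.mem_map, Finset.mem_toList,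
    Finset.mem_filter, Finset.mem_univ, true_and, forall_exists_index, and_imp]
  constructor
  · intro h x
    by_contra hx
    have := h _ (P.ans (fun y => xor (g y) (z (e y))) (x, α), x) hx rfl
    rw [rd3Clause_eval] at this
    exact this rfl
  · rintro h _ ⟨b, x⟩ hb rfl
    rw [rd3Clause_eval]
    intro hab
    have := h x
    rw [OracleProc.run] at this
    dsimp only at hab hb
    rw [hab] at this
    exact hb this

theorem rd3_width {ℓ a q n : ℕ} {Q : Type*}
    (P : OracleProc q ((Fin ℓ → Bool) × (Fin a → Bool)) Q) (e : Q ≃ Fin n) (g : Q → Bool)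
    (f : (Fin ℓ → Bool) → Bool) (α : Fin a → Bool) :
    BCNF.width (rd3CNF P e g f α) q ∧ (rd3CNF P e g f α).length ≤ 2 ^ (q + ℓ) := by
  constructor
  · intro c hc
    simp only [rd3CNF, List.mem_map] at hc
    obtain ⟨p, -, rfl⟩ := hc
    simp [rd3Clause]
  · rw [rd3CNF, List.length_map, Finset.length_toList]
    refine (Finset.card_le_univ _).trans ?_
    simp [pow_add]

theorem rd3_exists {ℓ a n : ℕ} {Q : Type*} (e : Q ≃ Fin n)
    (Con : ((Fin ℓ → Bool) → Bool) → Q → Bool)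
    (R : (Q → Bool) → (Fin ℓ → Bool) → (Fin a → Bool) → Bool) :
    ∃ f : (Fin ℓ → Bool) → Bool,
      uPr (fun z : Fin n → Bool => ∃ α, ∀ x, R (fun y => xor (Con f y) (z (e y))) x α = f x) ≤
        (2 : ℝ) ^ (-((2 : ℝ) ^ (ℓ : ℕ) - (a : ℝ))) := by
  let P : ((Fin ℓ → Bool) → Bool) → (Fin n → Bool) → Prop := fun f z =>
    ∃ α, ∀ x, R (fun y => xor (Con f y) (z (e y))) x α = f x
  have hcard : Fintype.card (Σ f, {z // P f z}) ≤
      Fintype.card ((Fin n → Bool) × (Fin a → Bool)) := by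
    choose A hA using fun s : (Σ f, {z // P f z}) => s.2.2
    refine Fintype.card_le_of_injective
      (fun s => (fun i => xor (Con s.1 (e.symm i)) (s.2.1 i), A s)) ?_
    intro s t hst
    simp only [Prod.mk.injEq] at hst
    obtain ⟨h1, h2⟩ := hst
    have hD : (fun y => xor (Con s.1 y) (s.2.1 (e y))) =
        (fun y => xor (Con t.1 y) (t.2.1 (e y))) := by
      funext y
      simpa using congrFun h1 (e y)
    have hft : s.1 = t.1 := by
      funext x
      rw [← hA s x, ← hA t x, hD, h2]
    obtain ⟨f, z, hz⟩ := s
    obtain ⟨f', z', hz'⟩ := t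
    dsimp only at hft
    subst hft
    have : z = z' := by
      funext i
      simpa using congrFun h1 i
    subst this
    rfl
  rw [Fintype.card_sigma] at hcard
  have hex : ∃ f, 2 ^ (2 ^ ℓ) * Fintype.card {z // P f z} ≤ 2 ^ n * 2 ^ a := by
    by_contra! hcon
    have := Finset.sum_lt_sum_of_nonempty (s := (Finset.univ : Finset ((Fin ℓ → Bool) → Bool)))
      Finset.univ_nonempty (fun f _ => hcon f)
    simp at this hcard
    rw [← Finset.mul_sum] at this
    have h2 := Nat.mul_le_mul_left (2 ^ 2 ^ ℓ) hcard
    refine absurd (lt_of_lt_of_le this h2) (not_lt.mpr (le_of_eq ?_))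
    ring
  obtain ⟨f, hf⟩ := hex
  refine ⟨f, ?_⟩
  have hf' : (2 : ℝ) ^ (2 ^ ℓ) * (Fintype.card {z // P f z} : ℝ) ≤ 2 ^ n * 2 ^ a := by
    exact_mod_cast hf
  have hr : (2 : ℝ) ^ (-((2 : ℝ) ^ (ℓ : ℕ) - (a : ℝ))) = 2 ^ a / 2 ^ (2 ^ ℓ) := by
    rw [neg_sub, Real.rpow_sub two_pos, Real.rpow_natCast]
    congr 1
    rw [← Real.rpow_natCast 2 (2 ^ ℓ)]
    push_cast
    rfl
  rw [hr]
  have hu := rd3_uPr (P f)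
  change uPr (P f) ≤ _
  rw [hu]
  rw [Fintype.card_fun, Fintype.card_bool, Fintype.card_fin, div_le_div_iff₀ (by positivity) (by positivity)]
  push_cast
  linarith

/-- Lemma 4.3: a black-box HF ⇒ (1/2+ε)-HF proof yields a depth-3 circuit (an OR of
`2^a` many `q`-CNFs, each with at most `2^{q+ℓ}` clauses) that accepts all strings of low
Hamming weight but almost no uniform strings. -/
theorem reduction_to_depth3_circuit (ℓ ℓ' a q n : ℕ) (ε : ℝ)
    (hn : n = 2 ^ ℓ')
    (Con : ((Fin ℓ → Bool) → Bool) → (Fin ℓ' → Bool) → Bool)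
    (Red : OracleProc q ((Fin ℓ → Bool) × (Fin a → Bool)) (Fin ℓ' → Bool))
    -- (Con, Red) is a black-box HF ⇒ (1/2+ε)-HF proof:
    (hRed : ∀ (f : (Fin ℓ → Bool) → Bool) (D : (Fin ℓ' → Bool) → Bool),
      uPr (fun x : Fin ℓ' → Bool => D x = Con f x) ≥ 1 / 2 + ε →
      ∃ α : Fin a → Bool, ∀ x : Fin ℓ → Bool, OracleProc.run Red D (x, α) = f x) :
    ∃ C : (Fin a → Bool) → BCNF n,
      (∀ α, BCNF.width (C α) q ∧ (C α).length ≤ 2 ^ (q + ℓ)) ∧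
      uPr (fun x : Fin n → Bool => ∃ α, BCNF.eval (C α) x = true) ≤
          (2 : ℝ) ^ (-((2 : ℝ) ^ (ℓ : ℕ) - (a : ℝ))) ∧
      ∀ x : Fin n → Bool, (wt x : ℝ) ≤ (1 / 2 - ε) * (n : ℝ) →
        ∃ α, BCNF.eval (C α) x = true := by
  have hc : Fintype.card (Fin ℓ' → Bool) = Fintype.card (Fin n) := by simp [hn]
  let e : (Fin ℓ' → Bool) ≃ Fin n := Fintype.equivOfCardEq hc
  obtain ⟨f, hf⟩ := rd3_exists (a := a) e Con (fun D x α => Red.run D (x, α))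
  refine ⟨fun α => rd3CNF Red e (Con f) f α, fun α => rd3_width _ _ _ _ _, ?_, ?_⟩
  · simpa only [rd3CNF_eval] using hf
  · intro z hz
    simp only [rd3CNF_eval]
    apply hRed
    have h1 : Fintype.card {x : Fin ℓ' → Bool // xor (Con f x) (z (e x)) = Con f x} + wt z = n := by
      have h2 : Fintype.card {x : Fin ℓ' → Bool // xor (Con f x) (z (e x)) = Con f x}
          = (Finset.univ.filter (fun i => ¬ z i = true)).card := by
        rw [← Fintype.card_subtype]
        refine Fintype.card_congr (e.subtypeEquiv ?_)
        intro x
        cases Con f x <;> cases z (e x) <;> simp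
      rw [h2, wt, add_comm, Finset.card_filter_add_card_filter_not]
      simp
    have hn0 : (0 : ℝ) < n := by rw [hn]; positivity
    have h3 : ((Fintype.card {x : Fin ℓ' → Bool // xor (Con f x) (z (e x)) = Con f x} : ℕ) : ℝ)
        + wt z = n := by exact_mod_cast h1
    have hu := rd3_uPr (fun x : Fin ℓ' → Bool => xor (Con f x) (z (e x)) = Con f x)
    beta_reduce at hu
    rw [hu, hc, Fintype.card_fin, ge_iff_le, le_div_iff₀ hn0]
    linarith
end

section
/- There exists a constant n₀ such that the following holds for all n ≥ n₀. Let 0 < ε ≤ 1/10 and let C = ⋁_{α ∈ {0,1}^a} C^α be a Boolean function on n variables, where each C^α is a q-CNF over n variables. Assume Pr[C(U_n) = 1] ≤ 2^{−(2^ℓ − a)} and C(x) = 1 for every x ∈ {0,1}^n with wt(x) ≤ (1/2 − ε)·n. Then there exists α ∈ {0,1}^a such that Pr[C^α(U_n) = 1] ≤ 2^{−(2^ℓ − a)} and Pr[C^α(U^{1/3}_n) = 1] ≥ 2^{−(a+1)}. -/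
open scoped BigOperators

attribute [local instance] Classical.propDecidable

lemma aux_sum (n : ℕ) (p v : ℝ) :
    ∑ x : Fin n → Bool, (∏ i, if x i then p else 1 - p) * v ^ (wt x) = (p * v + (1 - p)) ^ n := by
  have h := Finset.prod_univ_sum (fun _ : Fin n => (Finset.univ : Finset Bool))
    (fun _ b => if b = true then p * v else 1 - p)
  simp only [Fintype.piFinset_univ] at h
  have h2 : (p * v + (1 - p)) ^ n
      = ∏ _i : Fin n, ∑ j : Bool, (if j = true then p * v else 1 - p) := by simp
  rw [h2, h]
  refine Finset.sum_congr rfl fun x _ => ?_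
  have : v ^ (wt x) = ∏ i, (if x i = true then v else 1) := by
    rw [Finset.prod_ite]; simp [wt]
  rw [this, ← Finset.prod_mul_distrib]
  refine Finset.prod_congr rfl fun i _ => ?_
  by_cases hx : x i = true <;> simp [hx]

lemma aux_w_nonneg {n : ℕ} (x : Fin n → Bool) :
    (0:ℝ) ≤ ∏ i, if x i then (1/3 : ℝ) else 1 - 1/3 :=
  Finset.prod_nonneg fun i _ => by split_ifs <;> norm_num

lemma aux_mono {X : Type*} [Fintype X] {P Q : X → Prop} (h : ∀ x, P x → Q x) :
    uPr P ≤ uPr Q := by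
  unfold uPr
  gcongr
  exact Fintype.card_le_of_injective (fun y : {x // P x} => (⟨y.1, h _ y.2⟩ : {x // Q x}))
    (fun y z h => Subtype.ext (by simpa using h))

lemma aux_tail (n : ℕ) (h : ((2/3 + (17/16)^5/3) / (17/16)^2 : ℝ) ^ n ≤ 1/2) :
    (1/2 : ℝ) ≤ bPr (1/3) (fun x : Fin n → Bool => (wt x : ℝ) ≤ 2/5 * n) := by
  have h1 := aux_sum n (1/3) 1
  have h2 := aux_sum n (1/3) ((17/16)^5)
  have key : ∀ x : Fin n → Bool, (∏ i, if x i then (1/3 : ℝ) else 1 - 1/3) * 1 ^ (wt x) ≤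
      (if (wt x : ℝ) ≤ 2/5 * n then (∏ i, if x i then (1/3 : ℝ) else 1 - 1/3) else 0)
      + ((∏ i, if x i then (1/3 : ℝ) else 1 - 1/3) * ((17/16)^5) ^ (wt x)) / ((17/16)^2)^n := by
    intro x
    have hw := aux_w_nonneg x
    rw [one_pow, mul_one]
    split_ifs with hx
    · have : 0 ≤ ((∏ i, if x i then (1/3 : ℝ) else 1 - 1/3) * ((17/16)^5) ^ (wt x)) / ((17/16)^2)^n := by
        positivity
      linarith
    · rw [zero_add, mul_div_assoc]
      refine le_mul_of_one_le_right hw ?_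
      rw [one_le_div (by positivity), ← pow_mul, ← pow_mul]
      refine pow_le_pow_right₀ (by norm_num) ?_
      have : (2 * n : ℝ) ≤ 5 * wt x := by linarith
      exact_mod_cast this
  have h3 := Finset.sum_le_sum (s := Finset.univ) fun x _ => key x
  rw [h1, Finset.sum_add_distrib, ← Finset.sum_div, h2, ← div_pow] at h3
  have e : ((1/3 * (17/16)^5 + (1 - 1/3)) / (17/16)^2 : ℝ) = (2/3 + (17/16)^5/3) / (17/16)^2 := by
    norm_num
  rw [e] at h3
  have e1 : (1/3 * 1 + (1 - 1/3) : ℝ) ^ n = 1 := by norm_num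
  rw [e1] at h3
  unfold bPr
  linarith

/-- Claim 4.9: if an OR of `2^a` many `q`-CNFs is rarely one on uniform inputs but accepts
all strings of Hamming weight at most `(1/2-ε)n`, then some single CNF in the OR is rarely
one on uniform inputs yet non-negligibly often one on `1/3`-biased inputs. -/
theorem some_CNF_distinguishes :
    ∃ n₀ : ℕ,
      ∀ (n ℓ a q : ℕ) (ε : ℝ) (C : (Fin a → Bool) → BCNF n),
        n ≥ n₀ → 0 < ε → ε ≤ 1 / 10 →
        (∀ α, BCNF.width (C α) q) →
        uPr (fun x : Fin n → Bool => ∃ α, BCNF.eval (C α) x = true) ≤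
            (2 : ℝ) ^ (-((2 : ℝ) ^ (ℓ : ℕ) - (a : ℝ))) →
        (∀ x : Fin n → Bool, (wt x : ℝ) ≤ (1 / 2 - ε) * (n : ℝ) →
            ∃ α, BCNF.eval (C α) x = true) →
        ∃ α : Fin a → Bool,
          uPr (fun x : Fin n → Bool => BCNF.eval (C α) x = true) ≤
              (2 : ℝ) ^ (-((2 : ℝ) ^ (ℓ : ℕ) - (a : ℝ))) ∧
          bPr (1 / 3) (fun x : Fin n → Bool => BCNF.eval (C α) x = true) ≥
              (2 : ℝ) ^ (-((a : ℝ) + 1)) := by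
  obtain ⟨n₀, hn₀⟩ := exists_pow_lt_of_lt_one (show (0:ℝ) < 1/2 by norm_num)
    (show ((2/3 + (17/16)^5/3) / (17/16)^2 : ℝ) < 1 by norm_num)
  refine ⟨n₀, fun n ℓ a q ε C hn hε hε' _ hu hC => ?_⟩
  have ht := aux_tail n ((pow_le_pow_of_le_one (by norm_num) (by norm_num) hn).trans hn₀.le)
  by_contra hcon
  push Not at hcon
  have hlt : ∀ α, bPr (1 / 3) (fun x : Fin n → Bool => BCNF.eval (C α) x = true) <
      (2 : ℝ) ^ (-((a : ℝ) + 1)) := by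
    intro α
    refine hcon α (le_trans ?_ hu)
    refine aux_mono fun x hx => ⟨α, hx⟩
  have hs : ∑ α, bPr (1 / 3) (fun x : Fin n → Bool => BCNF.eval (C α) x = true) <
      ∑ _α : Fin a → Bool, (2 : ℝ) ^ (-((a : ℝ) + 1)) :=
    Finset.sum_lt_sum_of_nonempty Finset.univ_nonempty fun α _ => hlt α
  have hr : ∑ _α : Fin a → Bool, (2 : ℝ) ^ (-((a : ℝ) + 1)) = 1/2 := by
    rw [Finset.sum_const, Real.rpow_neg (by norm_num), Real.rpow_add (by norm_num)]
    simp
    field_simp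
  have hl : bPr (1/3) (fun x : Fin n → Bool => (wt x : ℝ) ≤ 2/5 * n) ≤
      ∑ α, bPr (1 / 3) (fun x : Fin n → Bool => BCNF.eval (C α) x = true) := by
    unfold bPr
    rw [Finset.sum_comm]
    refine Finset.sum_le_sum fun x _ => ?_
    have hw := aux_w_nonneg x
    have hnn : ∀ α ∈ Finset.univ, 0 ≤ (if BCNF.eval (C α) x = true then
        (∏ i, if x i then (1/3 : ℝ) else 1 - 1/3) else 0) := by
      intro α _
      split_ifs
      · exact hw
      · exact le_rfl
    split_ifs with hx
    · obtain ⟨α, hα⟩ := hC x (hx.trans (by gcongr; linarith))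
      have := Finset.single_le_sum hnn (Finset.mem_univ α)
      rw [if_pos hα] at this
      convert this
    · convert Finset.sum_nonneg hnn
  linarith
end

section
/- Let D be a v-CNF over m variables with v ≥ 1, let w > 0, and suppose Pr[D(U^{1/3}_m) = 1] ≥ 2^{−w} and w·4^v ≤ m. Then there exists a restriction ρ on m variables with Free(ρ) = m' = m − w·4^v such that: (1) the restricted function D_ρ : {0,1}^{m'} → {0,1} is computable by a (v−1)-CNF over m' variables; (2) Pr[D_ρ(U_{m'}) = 1] ≤ Pr[D(U_m) = 1] · 2^{w·4^v}; and (3) Pr[D_ρ(U^{1/3}_{m'}) = 1] ≥ Pr[D(U^{1/3}_m) = 1]. -/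
open scoped BigOperators

attribute [local instance] Classical.propDecidable

section Helpers

/-- The weight of a point under the biased measure. -/
noncomputable def wgt {ι : Type*} [Fintype ι] (x : ι → Bool) : ℝ :=
  ∏ i, if x i then (1 / 3 : ℝ) else 1 - 1 / 3

lemma wgt_pos {ι : Type*} [Fintype ι] (x : ι → Bool) : 0 < wgt x := by
  unfold wgt
  apply Finset.prod_pos
  intro i _
  split_ifs <;> norm_num

lemma bPr_eq {t : ℕ} (P : (Fin t → Bool) → Prop) :
    bPr (1 / 3) P = ∑ x : Fin t → Bool, if P x then wgt x else 0 := rfl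

lemma bPr_nonneg' {t : ℕ} (P : (Fin t → Bool) → Prop) : 0 ≤ bPr (1 / 3) P := by
  rw [bPr_eq]
  apply Finset.sum_nonneg
  intro x _
  split_ifs
  · exact (wgt_pos x).le
  · exact le_rfl

lemma bPr_mono' {t : ℕ} {P Q : (Fin t → Bool) → Prop} (h : ∀ x, P x → Q x) :
    bPr (1 / 3) P ≤ bPr (1 / 3) Q := by
  rw [bPr_eq, bPr_eq]
  apply Finset.sum_le_sum
  intro x _
  have := (wgt_pos x).le
  by_cases hP : P x
  · simp [hP, h x hP]
  · simp only [hP, if_false]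
    split_ifs
    · exact this
    · exact le_rfl

lemma bPr_split {t : ℕ} (P Q : (Fin t → Bool) → Prop) :
    bPr (1 / 3) P = bPr (1 / 3) (fun x => P x ∧ Q x) + bPr (1 / 3) (fun x => P x ∧ ¬ Q x) := by
  rw [bPr_eq, bPr_eq, bPr_eq, ← Finset.sum_add_distrib]
  apply Finset.sum_congr rfl
  intro x _
  by_cases hP : P x <;> by_cases hQ : Q x <;> simp [hP, hQ]

lemma sum_wgt {ι : Type*} [Fintype ι] [DecidableEq ι] : ∑ x : ι → Bool, wgt x = 1 := by
  unfold wgt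
  have := Finset.prod_univ_sum (fun _ : ι => (Finset.univ : Finset Bool))
    (fun _ b => if b then (1 / 3 : ℝ) else 1 - 1 / 3)
  rw [Fintype.piFinset_univ] at this
  rw [← this]
  simp

/-- Flip a coordinate. -/
noncomputable def flp {t : ℕ} (i : Fin t) (x : Fin t → Bool) : Fin t → Bool :=
  fun j => if j = i then !(x j) else x j

lemma flp_flp {t : ℕ} (i : Fin t) (x : Fin t → Bool) : flp i (flp i x) = x := by
  funext j
  by_cases h : j = i <;> simp [flp, h]

lemma wgt_flp {t : ℕ} (i : Fin t) (x : Fin t → Bool) : wgt (flp i x) ≤ 2 * wgt x := by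
  unfold wgt
  rw [← Finset.mul_prod_erase _ _ (Finset.mem_univ i), ← Finset.mul_prod_erase _ _ (Finset.mem_univ i)]
  have h : ∏ j ∈ Finset.univ.erase i, (if flp i x j then (1 / 3 : ℝ) else 1 - 1 / 3)
      = ∏ j ∈ Finset.univ.erase i, (if x j then (1 / 3 : ℝ) else 1 - 1 / 3) := by
    apply Finset.prod_congr rfl
    intro j hj
    simp [flp, Finset.ne_of_mem_erase hj]
  rw [h, ← mul_assoc]
  apply mul_le_mul_of_nonneg_right
  · cases hx : x i <;> simp [flp, hx] <;> norm_num
  · apply Finset.prod_nonneg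
    intro j _
    split_ifs <;> norm_num

/-- `P` does not depend on coordinate `i`. -/
def Indep {t : ℕ} (P : (Fin t → Bool) → Prop) (i : Fin t) : Prop :=
  ∀ x y, (∀ j, j ≠ i → x j = y j) → (P x ↔ P y)

lemma flp_iff {t : ℕ} {P : (Fin t → Bool) → Prop} {i : Fin t} (h : Indep P i) (x) :
    P (flp i x) ↔ P x := by
  apply h
  intro j hj
  simp [flp, hj]

lemma lit_bound {t : ℕ} {P : (Fin t → Bool) → Prop} {i : Fin t} (h : Indep P i) (b : Bool) :
    bPr (1 / 3) P ≤ 3 * bPr (1 / 3) (fun x => P x ∧ x i ≠ b) := by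
  have h1 := bPr_split P (fun x => x i = b)
  have h2 : bPr (1 / 3) (fun x => P x ∧ x i = b) ≤ 2 * bPr (1 / 3) (fun x => P x ∧ x i ≠ b) := by
    rw [bPr_eq, bPr_eq, Finset.mul_sum]
    rw [← Equiv.sum_comp (Function.Involutive.toPerm (flp i) (flp_flp i))]
    apply Finset.sum_le_sum
    intro x _
    have h3 : flp i x i = b ↔ x i ≠ b := by
      cases hx : x i <;> cases b <;> simp [flp, hx]
    have h4 : (P (flp i x) ∧ flp i x i = b) ↔ (P x ∧ x i ≠ b) := by
      rw [h3, flp_iff h]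
    by_cases h5 : P x ∧ x i ≠ b
    · rw [if_pos h5, if_pos]
      · exact wgt_flp i x
      · exact h4.2 h5
    · rw [if_neg h5, if_neg]
      · simp
      · exact fun h6 => h5 (h4.1 h6)
  have h3 : bPr (1 / 3) (fun x => P x ∧ x i ≠ b) = bPr (1 / 3) (fun x => P x ∧ ¬ x i = b) := rfl
  linarith

lemma clause_eval_iff {n : ℕ} (c : BClause n) (x : Fin n → Bool) :
    BClause.eval c x = true ↔ ∃ l ∈ c, x l.1 = l.2 := by
  simp [BClause.eval]

lemma cnf_eval_iff {n : ℕ} (D : BCNF n) (x : Fin n → Bool) :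
    BCNF.eval D x = true ↔ ∀ c ∈ D, BClause.eval c x = true := by
  simp [BCNF.eval]

lemma clause_bound {t : ℕ} (c : BClause t) : ∀ (P : (Fin t → Bool) → Prop),
    (c.map Prod.fst).Nodup → (∀ l ∈ c, Indep P l.1) →
    bPr (1 / 3) P ≤ 3 ^ c.length * bPr (1 / 3) (fun x => P x ∧ ∀ l ∈ c, x l.1 ≠ l.2) := by
  induction c with
  | nil => intro P _ _; simp
  | cons l c ih =>
    intro P hn hP
    have h1 := lit_bound (hP l (by simp)) l.2
    rw [List.map_cons, List.nodup_cons] at hn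
    have h2 := ih (fun x => P x ∧ x l.1 ≠ l.2) hn.2 (by
      intro l' hl' x y hxy
      have hne : l.1 ≠ l'.1 := by
        intro he
        exact hn.1 (he ▸ List.mem_map_of_mem hl')
      change (P x ∧ x l.1 ≠ l.2) ↔ (P y ∧ y l.1 ≠ l.2)
      rw [hP l' (by simp [hl']) x y hxy, hxy _ hne])
    have h3 : (fun x : Fin t → Bool => (P x ∧ x l.1 ≠ l.2) ∧ ∀ l ∈ c, x l.1 ≠ l.2)
        = (fun x => P x ∧ ∀ l' ∈ l :: c, x l'.1 ≠ l'.2) := by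
      funext x
      simp [and_assoc]
    rw [h3] at h2
    rw [List.length_cons, pow_succ]
    linarith

/-- Disjointness of the variables. -/
def Dsj {n : ℕ} (c d : BClause n) : Prop := ∀ l ∈ c, ∀ l' ∈ d, l.1 ≠ l'.1

lemma family_bound {t : ℕ} (v : ℕ) (L : List (BClause t)) (hp : L.Pairwise Dsj)
    (hb : ∀ c ∈ L, c.length = v ∧ (c.map Prod.fst).Nodup) :
    bPr (1 / 3) (fun x => ∀ c ∈ L, BClause.eval c x = true) ≤ (1 - (3 ^ v)⁻¹ : ℝ) ^ L.length := by
  have h3 : (0 : ℝ) < 3 ^ v := by positivity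
  have hle : (3 ^ v : ℝ)⁻¹ ≤ 1 := inv_le_one_of_one_le₀ (one_le_pow₀ (by norm_num))
  induction L with
  | nil =>
    rw [bPr_eq]
    simp
    exact sum_wgt.le
  | cons c L ih =>
    rw [List.pairwise_cons] at hp
    have ih' := ih hp.2 (fun d hd => hb d (by simp [hd]))
    obtain ⟨hlen, hnd⟩ := hb c (by simp)
    set P : (Fin t → Bool) → Prop := fun x => ∀ c ∈ L, BClause.eval c x = true with hPdef
    have h1 := clause_bound c P hnd (by
      intro l hl x y hxy
      simp only [hPdef]
      refine forall₂_congr ?_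
      intro d hd
      rw [clause_eval_iff, clause_eval_iff]
      refine exists_congr ?_
      intro l'
      refine and_congr_right ?_
      intro hl'
      rw [hxy l'.1 (fun he => hp.1 d hd l hl l' hl' he.symm)])
    have h2 := bPr_split P (fun x => BClause.eval c x = true)
    have e1 : (fun x => P x ∧ ¬ BClause.eval c x = true) = (fun x => P x ∧ ∀ l ∈ c, x l.1 ≠ l.2) := by
      funext x
      rw [clause_eval_iff]
      simp only [not_exists, not_and, ne_eq]
    have e2 : (fun x => ∀ d ∈ c :: L, BClause.eval d x = true)
        = (fun x => P x ∧ BClause.eval c x = true) := by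
      funext x
      simp [hPdef, and_comm]
    rw [e1] at h2
    rw [e2]
    rw [hlen] at h1
    have h4 : (3 ^ v : ℝ)⁻¹ * bPr (1 / 3) P ≤ bPr (1 / 3) (fun x => P x ∧ ∀ l ∈ c, x l.1 ≠ l.2) := by
      rw [inv_mul_le_iff₀ h3]
      exact h1
    rw [List.length_cons, pow_succ]
    have h5 : (1 - (3 ^ v : ℝ)⁻¹) * bPr (1 / 3) P ≤ (1 - (3 ^ v : ℝ)⁻¹) * (1 - (3 ^ v : ℝ)⁻¹) ^ L.length :=
      mul_le_mul_of_nonneg_left ih' (by linarith)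
    linarith

lemma exists_family {t : ℕ} (B : BClause t → Prop) (D : List (BClause t)) :
    ∃ L : List (BClause t), L.Pairwise Dsj ∧ (∀ c ∈ L, c ∈ D ∧ B c) ∧
      ∀ c ∈ D, B c → c ∈ L ∨ ∃ d ∈ L, ¬ Dsj c d := by
  induction D with
  | nil => exact ⟨[], by simp⟩
  | cons c D ih =>
    obtain ⟨L, h1, h2, h3⟩ := ih
    by_cases hc : B c ∧ ∀ d ∈ L, Dsj c d
    · refine ⟨c :: L, List.pairwise_cons.2 ⟨hc.2, h1⟩, ?_, ?_⟩
      · intro d hd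
        rcases List.mem_cons.1 hd with rfl | hd
        · exact ⟨by simp, hc.1⟩
        · exact ⟨by simp [(h2 d hd).1], (h2 d hd).2⟩
      · intro d hd hB
        rcases List.mem_cons.1 hd with rfl | hd
        · left; simp
        · rcases h3 d hd hB with h | ⟨e, he, h⟩
          · left; simp [h]
          · right; exact ⟨e, by simp [he], h⟩
    · refine ⟨L, h1, fun d hd => ⟨by simp [(h2 d hd).1], (h2 d hd).2⟩, ?_⟩
      intro d hd hB
      rcases List.mem_cons.1 hd with rfl | hd
      · right
        by_contra hcon
        push Not at hcon
        exact hc ⟨hB, hcon⟩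
      · exact h3 d hd hB

lemma pow_ineq (v : ℕ) : 7 * v * 3 ^ v ≤ 10 * 4 ^ v := by
  rcases Nat.lt_or_ge v 3 with h | h
  · interval_cases v <;> norm_num
  · induction v, h using Nat.le_induction with
    | base => norm_num
    | succ n hn ih =>
      rw [pow_succ, pow_succ]
      have : 0 < 3 ^ n := by positivity
      nlinarith

lemma count_bound (v w k : ℕ) (h : (2 : ℝ) ^ (-(w : ℝ)) ≤ (1 - (3 ^ v)⁻¹ : ℝ) ^ k) :
    v * k ≤ w * 4 ^ v := by
  have hle : (3 ^ v : ℝ)⁻¹ ≤ 1 := inv_le_one_of_one_le₀ (one_le_pow₀ (by norm_num))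
  have h3 : (0 : ℝ) < 3 ^ v := by positivity
  have h1 : (1 - (3 ^ v)⁻¹ : ℝ) ^ k ≤ Real.exp (-(k * (3 ^ v)⁻¹)) := by
    calc (1 - (3 ^ v)⁻¹ : ℝ) ^ k ≤ (Real.exp (-(3 ^ v)⁻¹)) ^ k :=
          pow_le_pow_left₀ (by linarith) (Real.one_sub_le_exp_neg _) k
      _ = _ := by rw [← Real.exp_nat_mul]; ring_nf
  rw [Real.rpow_def_of_pos (by norm_num)] at h
  have h2 := Real.exp_le_exp.1 (h.trans h1)
  have h4 : (k : ℝ) * (3 ^ v)⁻¹ ≤ 0.7 * w := by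
    have := Real.log_two_lt_d9
    have hw : (0 : ℝ) ≤ w := by positivity
    nlinarith
  have h5 : (k : ℝ) ≤ 0.7 * w * 3 ^ v := by
    rwa [← div_eq_mul_inv, div_le_iff₀ h3] at h4
  have h6 : (7 * v * 3 ^ v : ℝ) ≤ 10 * 4 ^ v := by exact_mod_cast pow_ineq v
  have hv : (0 : ℝ) ≤ v := by positivity
  have hw : (0 : ℝ) ≤ w := by positivity
  have h7 : (v * k : ℝ) ≤ w * 4 ^ v := by
    nlinarith [mul_le_mul_of_nonneg_left h5 hv, mul_le_mul_of_nonneg_left h6 hw]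
  exact_mod_cast h7

lemma fill_eq {n t : ℕ} (ρ : Fin n → Option Bool) (S : Finset (Fin n)) (hS : freeSet ρ = S)
    (h : freeCount ρ = t) (h' : S.card = t) (x : Fin t → Bool) (i : Fin n) :
    Fill ρ h x i = if hm : i ∈ S then x ((S.orderIsoOfFin h').symm ⟨i, hm⟩)
      else (ρ i).getD false := by
  subst hS
  rfl

lemma averaging {n t : ℕ} (S : Finset (Fin n)) (e : Fin t ≃ {i // i ∈ S})
    (P : (Fin n → Bool) → Prop) :
    ∃ a : {i // ¬ i ∈ S} → Bool, bPr (1 / 3) P ≤ bPr (1 / 3) (fun y : Fin t → Bool =>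
      P (fun i => if h : i ∈ S then y (e.symm ⟨i, h⟩) else a ⟨i, h⟩)) := by
  set F : ({i // ¬ i ∈ S} → Bool) → ℝ := fun a => bPr (1 / 3) (fun y : Fin t → Bool =>
      P (fun i => if h : i ∈ S then y (e.symm ⟨i, h⟩) else a ⟨i, h⟩)) with hF
  have key : bPr (1 / 3) P = ∑ a, wgt a * F a := by
    rw [bPr_eq, ← Equiv.sum_comp (Equiv.piEquivPiSubtypeProd (· ∈ S) (fun _ => Bool)).symm,
      Fintype.sum_prod_type_right]
    apply Finset.sum_congr rfl
    intro a _
    rw [hF]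
    simp only
    rw [bPr_eq, Finset.mul_sum, ← Equiv.sum_comp (Equiv.arrowCongr e (Equiv.refl Bool))]
    apply Finset.sum_congr rfl
    intro y _
    have e1 : ((Equiv.piEquivPiSubtypeProd (· ∈ S) (fun _ => Bool)).symm
        ((Equiv.arrowCongr e (Equiv.refl Bool)) y, a))
        = (fun i => if h : i ∈ S then y (e.symm ⟨i, h⟩) else a ⟨i, h⟩) := by
      funext i
      simp only [Equiv.piEquivPiSubtypeProd_symm_apply]
      split_ifs <;> rfl
    rw [e1]
    have e2 : wgt (fun i => if h : i ∈ S then y (e.symm ⟨i, h⟩) else a ⟨i, h⟩) = wgt a * wgt y := by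
      unfold wgt
      rw [← Fintype.prod_subtype_mul_prod_subtype (· ∈ S), mul_comm]
      congr 1
      · apply Finset.prod_congr rfl
        intro i _
        simp [i.2]
      · refine @Fintype.prod_equiv _ _ ℝ (Subtype.fintype fun x => x ∈ S) _ _ e.symm _ _ ?_
        intro i
        simp
    rw [e2, mul_ite, mul_zero]
  by_contra hcon
  push Not at hcon
  have : ∑ a, wgt a * F a < ∑ a : {i // ¬ i ∈ S} → Bool, wgt a * bPr (1 / 3) P := by
    apply Finset.sum_lt_sum_of_nonempty Finset.univ_nonempty
    intro a _
    exact mul_lt_mul_of_pos_left (hcon a) (wgt_pos a)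
  rw [← Finset.sum_mul, sum_wgt, one_mul, ← key] at this
  exact lt_irrefl _ this

lemma clause_restrict {n t v : ℕ} (S : Finset (Fin n)) (e : Fin t ≃ {i // i ∈ S})
    (a : {i // ¬ i ∈ S} → Bool) (c : BClause n) (hv : 1 ≤ v) (hlen : c.length ≤ v)
    (hT : c.length = v → (c.map Prod.fst).Nodup → ∃ l ∈ c, l.1 ∉ S) :
    (∀ y : Fin t → Bool,
      BClause.eval c (fun i => if h : i ∈ S then y (e.symm ⟨i, h⟩) else a ⟨i, h⟩) = true) ∨
    ∃ c' : BClause t, c'.length ≤ v - 1 ∧ ∀ y : Fin t → Bool, BClause.eval c' y =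
      BClause.eval c (fun i => if h : i ∈ S then y (e.symm ⟨i, h⟩) else a ⟨i, h⟩) := by
  by_cases h1 : ∃ l ∈ c, ∃ h : l.1 ∉ S, a ⟨l.1, h⟩ = l.2
  · left
    intro y
    obtain ⟨l, hl, h, ha⟩ := h1
    rw [clause_eval_iff]
    exact ⟨l, hl, by simp [h, ha]⟩
  by_cases h2 : ∃ i, (i, true) ∈ c ∧ (i, false) ∈ c
  · left
    intro y
    obtain ⟨i, hi, hi'⟩ := h2
    rw [clause_eval_iff]
    cases hb : (fun i => if h : i ∈ S then y (e.symm ⟨i, h⟩) else a ⟨i, h⟩ : Fin n → Bool) i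
    · exact ⟨_, hi', hb⟩
    · exact ⟨_, hi, hb⟩
  right
  let f : Fin n × Bool → Option (Fin t × Bool) := fun l =>
    if h : l.1 ∈ S then some (e.symm ⟨l.1, h⟩, l.2) else none
  refine ⟨c.dedup.filterMap f, ?_, ?_⟩
  · have hd : c.dedup.length ≤ c.length := (List.dedup_sublist c).length_le
    have hf : (c.dedup.filterMap f).length ≤ c.dedup.length := List.length_filterMap_le _ _
    by_contra hcon
    have hcv : c.length = v := by omega
    have hdd : c.dedup = c := (List.dedup_sublist c).eq_of_length (by omega)
    have hnd : c.Nodup := List.dedup_eq_self.1 hdd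
    have hnd' : (c.map Prod.fst).Nodup := by
      apply List.Nodup.map_on _ hnd
      rintro ⟨i, b⟩ hl ⟨i', b'⟩ hl' he
      simp only at he
      subst he
      by_contra hne
      apply h2
      cases b <;> cases b' <;> simp_all
    obtain ⟨l, hl, hlS⟩ := hT hcv hnd'
    have h5 : (c.filterMap f).length = c.length := by
      rw [hdd] at hf hcon
      omega
    rw [List.length_filterMap_eq_countP, List.countP_eq_length] at h5
    have := h5 l hl
    simp [f, hlS] at this
  · intro y
    rw [Bool.eq_iff_iff, clause_eval_iff, clause_eval_iff]
    constructor
    · rintro ⟨l', hl', hy⟩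
      rw [List.mem_filterMap] at hl'
      obtain ⟨l, hl, hfl⟩ := hl'
      rw [List.mem_dedup] at hl
      by_cases hS : l.1 ∈ S
      · simp only [f, hS, dif_pos, Option.some.injEq] at hfl
        subst hfl
        exact ⟨l, hl, by simpa [hS] using hy⟩
      · simp [f, hS] at hfl
    · rintro ⟨l, hl, hy⟩
      by_cases hS : l.1 ∈ S
      · refine ⟨(e.symm ⟨l.1, hS⟩, l.2), ?_, by simpa [hS] using hy⟩
        rw [List.mem_filterMap]
        exact ⟨l, List.mem_dedup.2 hl, by simp [f, hS]⟩
      · exact absurd ⟨l, hl, hS, by simpa [hS] using hy⟩ h1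

lemma cnf_restrict {n t q : ℕ} (F : (Fin t → Bool) → (Fin n → Bool)) (D : BCNF n)
    (h : ∀ c ∈ D, (∀ y, BClause.eval c (F y) = true) ∨
      ∃ c' : BClause t, c'.length ≤ q ∧ ∀ y, BClause.eval c' y = BClause.eval c (F y)) :
    ∃ D' : BCNF t, BCNF.width D' q ∧ ∀ y, BCNF.eval D' y = BCNF.eval D (F y) := by
  induction D with
  | nil => exact ⟨[], by simp [BCNF.width], by simp [BCNF.eval]⟩
  | cons c D ih =>
    obtain ⟨D', h1, h2⟩ := ih (fun d hd => h d (by simp [hd]))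
    have hcons : ∀ {k : ℕ} (c : BClause k) (D : BCNF k) x,
        BCNF.eval (c :: D) x = (BClause.eval c x && BCNF.eval D x) := by
      intro k c D x
      simp [BCNF.eval]
    rcases h c (by simp) with hc | ⟨c', hl, hc⟩
    · exact ⟨D', h1, fun y => by rw [hcons, hc, h2, Bool.true_and]⟩
    · refine ⟨c' :: D', ?_, fun y => by rw [hcons, hcons, hc, h2]⟩
      intro d hd
      rcases List.mem_cons.1 hd with rfl | hd
      · exact hl
      · exact h1 d hd

end Helpers

/-- Lemma 4.10: a `v`-CNF that is non-negligibly often one on `1/3`-biased inputs admits a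
restriction fixing `w·4^v` variables that reduces its width while roughly preserving its
acceptance probabilities. -/
theorem width_reduction_by_restriction (m v w : ℕ) (D : BCNF m)
    (hv : v ≥ 1) (hw : w > 0)
    (hwid : BCNF.width D v)
    (hpr : bPr (1 / 3) (fun x : Fin m → Bool => BCNF.eval D x = true) ≥
        (2 : ℝ) ^ (-(w : ℝ)))
    (hm : w * 4 ^ v ≤ m) :
    ∃ (ρ : Fin m → Option Bool) (h : freeCount ρ = m - w * 4 ^ v),
      (∃ D' : BCNF (m - w * 4 ^ v), BCNF.width D' (v - 1) ∧
          ∀ x : Fin (m - w * 4 ^ v) → Bool, BCNF.eval D' x = BCNF.eval D (Fill ρ h x)) ∧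
      uPr (fun x : Fin (m - w * 4 ^ v) → Bool => BCNF.eval D (Fill ρ h x) = true) ≤
          uPr (fun x : Fin m → Bool => BCNF.eval D x = true) * (2 : ℝ) ^ (w * 4 ^ v) ∧
      bPr (1 / 3) (fun x : Fin (m - w * 4 ^ v) → Bool => BCNF.eval D (Fill ρ h x) = true) ≥
          bPr (1 / 3) (fun x : Fin m → Bool => BCNF.eval D x = true) := by
  obtain ⟨L, hL1, hL2, hL3⟩ :=
    exists_family (fun c : BClause m => c.length = v ∧ (c.map Prod.fst).Nodup) D
  have hcount : v * L.length ≤ w * 4 ^ v := by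
    apply count_bound
    refine le_trans hpr (le_trans (bPr_mono' ?_) (family_bound v L hL1 (fun c hc => (hL2 c hc).2)))
    intro x hx c hc
    exact (cnf_eval_iff D x).1 hx c (hL2 c hc).1
  -- the variables of the family
  let T0 : Finset (Fin m) := (L.flatten.map Prod.fst).toFinset
  have hT0 : T0.card ≤ w * 4 ^ v := by
    refine le_trans (List.toFinset_card_le _) ?_
    rw [List.length_map, List.length_flatten]
    have : (L.map List.length).sum ≤ (L.map List.length).length • v := by
      apply List.sum_le_card_nsmul
      intro k hk
      obtain ⟨c, hc, rfl⟩ := List.mem_map.1 hk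
      exact (hL2 c hc).2.1.le
    rw [List.length_map, smul_eq_mul, mul_comm] at this
    exact this.trans hcount
  obtain ⟨T, hT0T, -, hTc⟩ := Finset.exists_subsuperset_card_eq (Finset.subset_univ T0) hT0
    (by simpa using hm)
  have hSc : (Tᶜ).card = m - w * 4 ^ v := by
    rw [Finset.card_compl, hTc, Fintype.card_fin]
  set S : Finset (Fin m) := Tᶜ with hS
  obtain ⟨a, ha⟩ := averaging S (S.orderIsoOfFin hSc).toEquiv (fun x => BCNF.eval D x = true)
  let ρ : Fin m → Option Bool := fun i => if h : i ∈ S then none else some (a ⟨i, h⟩)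
  have hfree : freeSet ρ = S := by
    ext i
    by_cases h : i ∈ S <;> simp [freeSet, ρ, h]
  have h : freeCount ρ = m - w * 4 ^ v := by rw [freeCount, hfree, hSc]
  have hfill : ∀ y, Fill ρ h y = (fun i => if h : i ∈ S then
      y ((S.orderIsoOfFin hSc).toEquiv.symm ⟨i, h⟩) else a ⟨i, h⟩) := by
    intro y
    funext i
    rw [fill_eq ρ S hfree h hSc]
    by_cases hi : i ∈ S
    · simp only [hi, dif_pos]; rfl
    · simp [hi, ρ]
  refine ⟨ρ, h, ?_, ?_, ?_⟩
  · apply cnf_restrict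
    intro c hc
    simp only [hfill]
    apply clause_restrict S _ a c hv (hwid c hc)
    intro hlen hnd
    have hmem : ∀ d ∈ L, ∀ l ∈ d, l.1 ∉ S := by
      intro d hd l hl
      rw [hS, Finset.mem_compl, not_not]
      apply hT0T
      rw [List.mem_toFinset, List.mem_map]
      exact ⟨l, List.mem_flatten.2 ⟨d, hd, hl⟩, rfl⟩
    rcases hL3 c hc ⟨hlen, hnd⟩ with hcL | ⟨d, hd, hcd⟩
    · have hne : c ≠ [] := by
        rintro rfl
        simp at hlen
        omega
      obtain ⟨l, hl⟩ := List.exists_mem_of_ne_nil c hne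
      exact ⟨l, hl, hmem c hcL l hl⟩
    · unfold Dsj at hcd
      push Not at hcd
      obtain ⟨l, hl, l', hl', he⟩ := hcd
      exact ⟨l, hl, he ▸ hmem d hd l' hl'⟩
  · have hinj : Function.Injective (Fill ρ h) := by
      intro y z hyz
      funext j
      have := congrFun hyz ((S.orderIsoOfFin hSc).toEquiv j)
      rw [hfill, hfill] at this
      simp only [Subtype.coe_eta, Equiv.symm_apply_apply] at this
      have hj : ((S.orderIsoOfFin hSc).toEquiv j : Fin m) ∈ S := ((S.orderIsoOfFin hSc).toEquiv j).2
      rw [dif_pos hj, dif_pos hj] at this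
      exact this
    have hcard : Fintype.card {y // BCNF.eval D (Fill ρ h y) = true} ≤
        Fintype.card {x // BCNF.eval D x = true} := by
      apply Fintype.card_le_of_injective (fun y => ⟨Fill ρ h y.1, y.2⟩)
      intro y z hyz
      exact Subtype.ext (hinj (congrArg Subtype.val hyz))
    unfold uPr
    have hpow : (2 : ℝ) ^ m = 2 ^ (m - w * 4 ^ v) * 2 ^ (w * 4 ^ v) := by
      rw [← pow_add, Nat.sub_add_cancel hm]
    simp only [Fintype.card_pi, Fintype.card_bool, Finset.prod_const, Finset.card_univ,
      Fintype.card_fin]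
    push_cast
    rw [hpow, div_mul_eq_mul_div, mul_div_mul_right _ _ (by positivity)]
    apply div_le_div_of_nonneg_right _ (by positivity)
    rw [Nat.cast_le]
    convert hcard
  · simp only [hfill]
    exact ha
end

section
/- There exists a constant c > 0 such that the following holds. For every ℓ, every Δ ≥ 0, every set A ⊆ Func_{ℓ,1} with |A| ≥ 2^{2^ℓ − Δ}, and every function C : {0,1}^ℓ → {0,1}: Pr_{F uniform in A, X uniform in {0,1}^ℓ}[C(X) = F(X)] ≤ 1/2 + c·√((Δ + ℓ)/2^ℓ). -/
open scoped BigOperators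

attribute [local instance] Classical.propDecidable

lemma mgf_aux {X : Type*} [Fintype X] (C : X → Bool) (a : ℝ) :
    ∑ F : X → Bool, Real.exp (a * ∑ x, (if C x = F x then (1:ℝ) else -1)) ≤
      2 ^ (Fintype.card X) * Real.exp (a ^ 2 / 2 * Fintype.card X) := by
  have h1 : ∀ F : X → Bool, Real.exp (a * ∑ x, (if C x = F x then (1:ℝ) else -1)) =
      ∏ x, Real.exp (a * (if C x = F x then (1:ℝ) else -1)) := by
    intro F
    rw [Finset.mul_sum, Real.exp_sum]
  have h2 : ∑ F : X → Bool, ∏ x, Real.exp (a * (if C x = F x then (1:ℝ) else -1)) =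
      ∏ x, ∑ b : Bool, Real.exp (a * (if C x = b then (1:ℝ) else -1)) := by
    rw [Finset.prod_univ_sum, Fintype.piFinset_univ]
  have h3 : ∀ x, ∑ b : Bool, Real.exp (a * (if C x = b then (1:ℝ) else -1)) =
      2 * Real.cosh a := by
    intro x
    rw [Fintype.sum_bool, Real.cosh_eq]
    cases C x <;> simp <;> ring
  rw [Finset.sum_congr rfl (fun F _ => h1 F), h2, Finset.prod_congr rfl (fun x _ => h3 x),
    Finset.prod_const, Finset.card_univ, mul_pow]
  have h4 : Real.cosh a ^ (Fintype.card X) ≤ Real.exp (a ^ 2 / 2 * Fintype.card X) := by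
    rw [mul_comm, Real.exp_nat_mul]
    exact pow_le_pow_left₀ (Real.cosh_pos a).le (Real.cosh_le_exp_half_sq a) _
  gcongr

lemma mgf_aux2 {X : Type*} [Fintype X] (C : X → Bool) (a : ℝ) (A : Finset (X → Bool)) :
    ∑ F ∈ A, Real.exp (a * ∑ x, (if C x = F x then (1:ℝ) else -1)) ≤
      2 ^ (Fintype.card X) * Real.exp (a ^ 2 / 2 * Fintype.card X) :=
  (Finset.sum_le_sum_of_subset_of_nonneg (Finset.subset_univ _)
      (fun _ _ _ => (Real.exp_pos _).le)).trans (mgf_aux C a)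

lemma agree_aux {X : Type*} [Fintype X] (C F : X → Bool) :
    ((Finset.univ.filter (fun x : X => C x = F x)).card : ℝ) =
      (Fintype.card X + ∑ x, (if C x = F x then (1:ℝ) else -1)) / 2 := by
  have h : ∀ x, (if C x = F x then (1:ℝ) else -1) = 2 * (if C x = F x then (1:ℝ) else 0) - 1 := by
    intro x
    split_ifs <;> norm_num
  rw [Finset.sum_congr rfl (fun x _ => h x), Finset.sum_sub_distrib, ← Finset.mul_sum,
    Finset.sum_boole]
  simp

/-- Claim 3.13: no single function `C` agrees well on average with a random function drawn
from a large set `A` of functions. -/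
theorem no_good_approximator_for_large_sets :
    ∃ c : ℝ, c > 0 ∧
      ∀ (ℓ : ℕ) (Δ : ℝ) (A : Finset ((Fin ℓ → Bool) → Bool)) (C : (Fin ℓ → Bool) → Bool),
        Δ ≥ 0 →
        (A.card : ℝ) ≥ (2 : ℝ) ^ ((2 : ℝ) ^ (ℓ : ℕ) - Δ) →
        (∑ F ∈ A, ((Finset.univ.filter (fun x : Fin ℓ → Bool => C x = F x)).card : ℝ)) /
            ((A.card : ℝ) * 2 ^ ℓ) ≤
          1 / 2 + c * Real.sqrt ((Δ + (ℓ : ℝ)) / 2 ^ ℓ) := by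
  refine ⟨1, one_pos, ?_⟩
  intro ℓ Δ A C hΔ hA
  have hcard : Fintype.card (Fin ℓ → Bool) = 2 ^ ℓ := by simp
  have hN : (0:ℝ) < 2 ^ ℓ := by positivity
  have hA0 : (0:ℝ) < A.card := lt_of_lt_of_le (Real.rpow_pos_of_pos two_pos _) hA
  set Z : ((Fin ℓ → Bool) → Bool) → ℝ :=
    fun F => ∑ x, (if C x = F x then (1:ℝ) else -1) with hZ
  obtain ⟨a, ha⟩ : ∃ a : ℝ, a * (A.card * 2 ^ ℓ) = ∑ F ∈ A, Z F :=
    ⟨(∑ F ∈ A, Z F) / (A.card * 2 ^ ℓ), by field_simp⟩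
  have hmgf : ∑ F ∈ A, Real.exp (a * Z F) ≤
      2 ^ (2 ^ ℓ) * Real.exp (a ^ 2 / 2 * ((2 ^ ℓ : ℕ) : ℝ)) := by
    have h := mgf_aux2 C a A
    rw [hcard] at h
    exact h
  rw [Nat.cast_pow, Nat.cast_ofNat] at hmgf
  have hJ : Real.exp (∑ F ∈ A, (1 / (A.card : ℝ)) • (a * Z F)) ≤
      ∑ F ∈ A, (1 / (A.card : ℝ)) • Real.exp (a * Z F) := by
    refine convexOn_exp.map_sum_le (fun _ _ => by positivity) ?_ (fun _ _ => Set.mem_univ _)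
    rw [Finset.sum_const, nsmul_eq_mul]
    field_simp
  have hL : ∑ F ∈ A, (1 / (A.card : ℝ)) • (a * Z F) = a ^ 2 * 2 ^ ℓ := by
    rw [← Finset.smul_sum, ← Finset.mul_sum, ← ha, smul_eq_mul]
    field_simp
  rw [hL, ← Finset.smul_sum, smul_eq_mul] at hJ
  have hJ2 : A.card * Real.exp (a ^ 2 * 2 ^ ℓ) ≤
      2 ^ (2 ^ ℓ) * Real.exp (a ^ 2 / 2 * 2 ^ ℓ) := by
    have h5 := mul_le_mul_of_nonneg_left hJ hA0.le
    rw [← mul_assoc, mul_one_div_cancel hA0.ne', one_mul] at h5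
    exact h5.trans hmgf
  have hpow : (2:ℝ) ^ ((2 : ℝ) ^ (ℓ : ℕ) - Δ) * (2:ℝ) ^ Δ = 2 ^ (2 ^ ℓ) := by
    rw [← Real.rpow_add two_pos, sub_add_cancel, ← Real.rpow_natCast 2 (2 ^ ℓ)]
    push_cast
    rfl
  have h2e : (2:ℝ) ^ Δ ≤ Real.exp Δ := by
    rw [← Real.exp_one_rpow Δ]
    exact Real.rpow_le_rpow (by norm_num) (by linarith [Real.add_one_le_exp (1:ℝ)]) hΔ
  have hJ3 : Real.exp (a ^ 2 * 2 ^ ℓ) ≤ Real.exp (Δ + a ^ 2 / 2 * 2 ^ ℓ) := by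
    have hp : (0:ℝ) < (2:ℝ) ^ ((2 : ℝ) ^ (ℓ : ℕ) - Δ) := Real.rpow_pos_of_pos two_pos _
    refine le_of_mul_le_mul_left ?_ hp
    calc _ ≤ A.card * Real.exp (a ^ 2 * 2 ^ ℓ) := by gcongr
      _ ≤ _ := hJ2
      _ = (2:ℝ) ^ ((2 : ℝ) ^ (ℓ : ℕ) - Δ) * ((2:ℝ) ^ Δ * Real.exp (a ^ 2 / 2 * 2 ^ ℓ)) := by
        rw [← hpow, mul_assoc]
      _ ≤ _ := by
        rw [Real.exp_add]
        gcongr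
  rw [Real.exp_le_exp] at hJ3
  have hfin : a / 2 ≤ Real.sqrt ((Δ + (ℓ : ℝ)) / 2 ^ ℓ) := by
    apply Real.le_sqrt_of_sq_le
    rw [le_div_iff₀ hN]
    have : (0:ℝ) ≤ ℓ := Nat.cast_nonneg ℓ
    nlinarith
  have hsum : (∑ F ∈ A, ((Finset.univ.filter (fun x : Fin ℓ → Bool => C x = F x)).card : ℝ)) =
      (A.card * 2 ^ ℓ) * (1 / 2 + a / 2) := by
    have h6 : ∀ F ∈ A, ((Finset.univ.filter (fun x : Fin ℓ → Bool => C x = F x)).card : ℝ) =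
        (2 ^ ℓ + Z F) / 2 := by
      intro F _
      rw [agree_aux C F, hcard]
      push_cast
      rfl
    rw [Finset.sum_congr rfl h6, ← Finset.sum_div, Finset.sum_add_distrib, ← ha,
      Finset.sum_const, nsmul_eq_mul]
    ring
  rw [hsum, mul_div_cancel_left₀ _ (by positivity)]
  linarith
end
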